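/- arXiv:2203.06625 — 6 statements merged into one kernel-verified Lean document; each statement's English description precedes it below -/
import Mathlib

section
/- Let V = F_2^n and 1 < k < n−1. For a (k−1)-dimensional subspace X ⊂ V, the set S^c(X) is a maximal clique of the graph Γ(n,k)_2 if and only if c(X) ≤ n−k−1. -/
/-!
Common definitions: `V = F^n`, coordinate hyperplanes, Grassmannians `G_k(V)`,
non-degenerate linear `[n,k]_q` codes `C(n,k)_q`, adjacency, stars, tops,
and (maximal) cliques of the graph `Γ(n,k)_q` of non-degenerate codes.
-/

/-- The `i`-th coordinate hyperplane `C_i ⊂ F^n`: the kernel of the `i`-th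
coordinate functional. -/
def coordHyp (F : Type*) [Field F] (n : ℕ) (i : Fin n) : Submodule F (Fin n → F) :=
  LinearMap.ker (LinearMap.proj i : (Fin n → F) →ₗ[F] F)

/-- The Grassmannian `G_k(V)`: the set of `k`-dimensional subspaces of `F^n`. -/
def grass (F : Type*) [Field F] (n k : ℕ) : Set (Submodule F (Fin n → F)) :=
  {X | Module.finrank F ↥X = k}

/-- `C(n,k)_q`: the set of non-degenerate linear `[n,k]` codes, i.e. `k`-dimensional
subspaces of `F^n` not contained in any coordinate hyperplane. -/
def ndCodes (F : Type*) [Field F] (n k : ℕ) : Set (Submodule F (Fin n → F)) :=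
  {X | Module.finrank F ↥X = k ∧ ∀ i : Fin n, ¬ X ≤ coordHyp F n i}

/-- Adjacency of `k`-dimensional subspaces: the intersection is `(k-1)`-dimensional. -/
def adjSub (F : Type*) [Field F] (n k : ℕ) (X Y : Submodule F (Fin n → F)) : Prop :=
  Module.finrank F ↥(X ⊓ Y) = k - 1

/-- The star `S(X) ⊂ G_k(V)` of a `(k-1)`-dimensional subspace `X`: all `k`-dimensional
subspaces containing `X`. -/
def starOf (F : Type*) [Field F] (n k : ℕ) (X : Submodule F (Fin n → F)) :
    Set (Submodule F (Fin n → F)) :=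
  {Y | Module.finrank F ↥Y = k ∧ X ≤ Y}

/-- The top `T(Y) ⊂ G_k(V)` of a `(k+1)`-dimensional subspace `Y`: all `k`-dimensional
subspaces of `Y`. -/
def topOf (F : Type*) [Field F] (n k : ℕ) (Y : Submodule F (Fin n → F)) :
    Set (Submodule F (Fin n → F)) :=
  {Z | Module.finrank F ↥Z = k ∧ Z ≤ Y}

/-- `S^c(X) = S(X) ∩ C(n,k)_q`. -/
def scOf (F : Type*) [Field F] (n k : ℕ) (X : Submodule F (Fin n → F)) :
    Set (Submodule F (Fin n → F)) :=
  starOf F n k X ∩ ndCodes F n k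

/-- `T^c(Y) = T(Y) ∩ C(n,k)_q`. -/
def tcOf (F : Type*) [Field F] (n k : ℕ) (Y : Submodule F (Fin n → F)) :
    Set (Submodule F (Fin n → F)) :=
  topOf F n k Y ∩ ndCodes F n k

/-- `c(X)`: the number of coordinate hyperplanes containing the subspace `X`. -/
noncomputable def numHyp (F : Type*) [Field F] (n : ℕ) (X : Submodule F (Fin n → F)) : ℕ :=
  Set.ncard {i : Fin n | X ≤ coordHyp F n i}

/-- A clique of the graph `Γ(n,k)_q`: a set of non-degenerate `[n,k]` codes that are
pairwise adjacent. -/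
def isClique (F : Type*) [Field F] (n k : ℕ) (S : Set (Submodule F (Fin n → F))) : Prop :=
  S ⊆ ndCodes F n k ∧ S.Pairwise (adjSub F n k)

/-- A maximal clique of `Γ(n,k)_q`: a clique not properly contained in another clique. -/
def isMaxClique (F : Type*) [Field F] (n k : ℕ) (S : Set (Submodule F (Fin n → F))) : Prop :=
  isClique F n k S ∧ ∀ T, isClique F n k T → S ⊆ T → T = S

/-- `[m]_q = q^{m-1} + ⋯ + q + 1 = (q^m - 1)/(q - 1)`. -/
def gaussNum (q m : ℕ) : ℕ := ∑ i ∈ Finset.range m, q ^ i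

/-!
Write `J` for the set of coordinates vanishing on `X`. As in the Grassmann graph, a `k`-dimensional
`Z` adjacent to every member of `S^c(X)` either contains `X` or satisfies `Y ≤ X ⊔ Z` for each
`Y ∈ S^c(X)`, and then all of `S^c(X)` lies in the `(k+1)`-dimensional space `X ⊔ Z`. So
maximality is decided by whether the span of `S^c(X)` has dimension at most `k + 1`.

Over `F_2` a code in `S^c(X)` consists of vectors vanishing on `J` or equal to `1` on `J`, so this
span is the space of all vectors that are constant on `J`, of dimension `n - (c(X) - 1)` with
truncated subtraction. If it is contained in a `(k+1)`-dimensional `U`, then `T^c(U)` is a clique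
containing `S^c(X)`, and it is strictly larger: `U` contains the all-ones vector, so any hyperplane
of `U` through that vector that misses a given nonzero `x ∈ X` is a non-degenerate code.
-/

open Module

section Dimension

variable {F V : Type*} [Field F] [AddCommGroup V] [Module F V] [FiniteDimensional F V]

lemma finrank_inf_ker_add_one {U : Submodule F V} {g : V →ₗ[F] F} (h : ¬ U ≤ LinearMap.ker g) :
    finrank F ↥(U ⊓ LinearMap.ker g) + 1 = finrank F U := by
  have restrict_ne_zero : g.domRestrict U ≠ 0 := fun h0 =>
    h fun u hu => LinearMap.congr_fun h0 ⟨u, hu⟩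
  have ker_restrict : (LinearMap.ker (g.domRestrict U)).map U.subtype = U ⊓ LinearMap.ker g := by
    rw [LinearMap.ker_domRestrict, Submodule.map_comap_subtype]
  rw [← ker_restrict, Submodule.finrank_map_subtype_eq]
  exact Dual.finrank_ker_add_one_of_ne_zero restrict_ne_zero

lemma exists_ge_finrank_eq (U : Submodule F V) {d : ℕ} (hUd : finrank F U ≤ d)
    (hd : d ≤ finrank F V) : ∃ W : Submodule F V, U ≤ W ∧ finrank F W = d := by
  induction d, hUd using Nat.le_induction with
  | base => exact ⟨U, le_rfl, rfl⟩
  | succ d _ ih =>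
    obtain ⟨W, hUW, hW⟩ := ih (by omega)
    obtain ⟨v, hv⟩ : ∃ v, v ∉ W := by
      by_contra! h
      rw [Submodule.eq_top_iff'.2 h, finrank_top] at hW
      omega
    exact ⟨W ⊔ Submodule.span F {v}, hUW.trans le_sup_left, by
      rw [Submodule.finrank_sup_span_singleton hv, hW]⟩

lemma not_le_of_ne_of_finrank_eq {Y Z : Submodule F V} (hne : Y ≠ Z)
    (h : finrank F Y = finrank F Z) : ¬ Y ≤ Z :=
  fun hle => hne (Submodule.eq_of_le_of_finrank_eq hle h)

end Dimension

section CoordinateSpace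

variable {F : Type*} [Field F] {ι : Type*}

lemma notMem_span_singleton_of_apply_eq_zero {x w : ι → F} (hx : x ≠ 0) {j : ι} (hxj : x j = 0)
    (hwj : w j ≠ 0) : x ∉ Submodule.span F {w} := by
  rw [Submodule.mem_span_singleton]
  rintro ⟨c, rfl⟩
  have hc : c = 0 := (mul_eq_zero.1 hxj).resolve_right hwj
  exact hx (by rw [hc, zero_smul])

variable (F)

/-- The space of vectors in `F^ι` whose coordinates indexed by `J` all agree. For `F = F_2` and `J`
the set of coordinates vanishing on `X` it is the span of the codes in `S^c(X)`. -/
def constOn (J : Set ι) : Submodule F (ι → F) where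
  carrier := {v | ∀ i ∈ J, ∀ j ∈ J, v i = v j}
  add_mem' hv hw i hi j hj := by simp only [Pi.add_apply, hv i hi j hj, hw i hi j hj]
  zero_mem' _ _ _ _ := rfl
  smul_mem' c v hv i hi j hj := by simp only [Pi.smul_apply, hv i hi j hj]

variable {F} in
lemma mem_constOn_iff_of_mem {J : Set ι} {j : ι} (hj : j ∈ J) {v : ι → F} :
    v ∈ constOn F J ↔ ∀ i ∈ J, v i = v j :=
  ⟨fun h i hi => h i hi j hj, fun h i hi i' hi' => (h i hi).trans (h i' hi').symm⟩

lemma constOn_empty : constOn F (∅ : Set ι) = ⊤ :=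
  Submodule.eq_top_iff'.2 fun _ _ hi => hi.elim

lemma finrank_constOn [Fintype ι] (J : Set ι) :
    finrank F (constOn F J) = Fintype.card ι - (J.ncard - 1) := by
  classical
  obtain rfl | ⟨j, hj⟩ := J.eq_empty_or_nonempty
  · rw [constOn_empty, finrank_top, finrank_fintype_fun_eq_card, Set.ncard_empty, Nat.zero_sub,
      Nat.sub_zero]
  let diff : (ι → F) →ₗ[F] (↥(J \ {j}) → F) :=
    LinearMap.pi fun i => (LinearMap.proj i.1 : (ι → F) →ₗ[F] F) - LinearMap.proj j
  have diff_apply (v : ι → F) (i : ↥(J \ {j})) : diff v i = v i - v j := rfl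
  have ker_diff : LinearMap.ker diff = constOn F J := by
    ext v
    rw [mem_constOn_iff_of_mem hj, LinearMap.mem_ker]
    refine ⟨fun h i hi => ?_, fun h => funext fun i => sub_eq_zero.2 (h i i.2.1)⟩
    obtain rfl | hij := eq_or_ne i j
    · rfl
    · exact sub_eq_zero.1 (congrFun h ⟨i, hi, hij⟩)
  have diff_surjective : Function.Surjective diff := fun u =>
    ⟨fun i => if hi : i ∈ J \ {j} then u ⟨i, hi⟩ else 0, funext fun i => by
      rw [diff_apply, dif_pos i.2, dif_neg fun h => h.2 rfl, sub_zero]⟩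
  have rank_nullity := LinearMap.finrank_range_add_finrank_ker diff
  rw [LinearMap.range_eq_top.2 diff_surjective, finrank_top, ker_diff, finrank_fintype_fun_eq_card,
    finrank_fintype_fun_eq_card, ← Nat.card_eq_fintype_card, Nat.card_coe_set_eq,
    Set.ncard_sdiff_singleton_of_mem hj] at rank_nullity
  omega

end CoordinateSpace

section Cliques

variable {F : Type*} [Field F] {n k : ℕ} {X Y Z U : Submodule F (Fin n → F)}

lemma mem_coordHyp {i : Fin n} {v : Fin n → F} : v ∈ coordHyp F n i ↔ v i = 0 :=
  Iff.rfl

lemma isClique_scOf (hX : finrank F X + 1 = k) : isClique F n k (scOf F n k X) := by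
  refine ⟨Set.inter_subset_right, fun Y hY Z hZ hne => ?_⟩
  obtain ⟨⟨hYk, hXY⟩, -⟩ := hY
  obtain ⟨⟨hZk, hXZ⟩, -⟩ := hZ
  have lower := Submodule.finrank_mono (le_inf hXY hXZ)
  have upper := Submodule.finrank_lt_finrank_of_lt
    (inf_lt_left.2 (not_le_of_ne_of_finrank_eq hne (hYk.trans hZk.symm)))
  unfold adjSub
  omega

lemma isClique_tcOf (hU : finrank F U = k + 1) : isClique F n k (tcOf F n k U) := by
  refine ⟨Set.inter_subset_right, fun Y hY Z hZ hne => ?_⟩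
  obtain ⟨⟨hYk, hYU⟩, -⟩ := hY
  obtain ⟨⟨hZk, hZU⟩, -⟩ := hZ
  have lower := Submodule.finrank_lt_finrank_of_lt
    (left_lt_sup.2 (not_le_of_ne_of_finrank_eq hne.symm (hZk.trans hYk.symm)))
  have upper := Submodule.finrank_mono (sup_le hYU hZU)
  have dim_formula := Submodule.finrank_sup_add_finrank_inf_eq Y Z
  unfold adjSub
  omega

lemma le_sup_of_adjSub (hX : finrank F X + 1 = k) (hY : Y ∈ starOf F n k X)
    (hYZ : adjSub F n k Y Z) (hXZ : ¬ X ≤ Z) : Y ≤ X ⊔ Z := by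
  obtain ⟨hYk, hXY⟩ := hY
  unfold adjSub at hYZ
  have inf_not_le : ¬ Y ⊓ Z ≤ X := fun h =>
    hXZ (Submodule.eq_of_le_of_finrank_eq h (by omega) ▸ inf_le_right)
  have lt_dim := Submodule.finrank_lt_finrank_of_lt (left_lt_sup.2 inf_not_le)
  have sup_eq : X ⊔ Y ⊓ Z = Y :=
    Submodule.eq_of_le_of_finrank_le (sup_le hXY inf_le_left) (by omega)
  exact sup_eq ▸ sup_le_sup_left inf_le_right X

lemma finrank_sup_le_of_adjSub (hY : Y ∈ starOf F n k X) (hZ : finrank F Z = k)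
    (hYZ : adjSub F n k Y Z) : finrank F ↥(X ⊔ Z) ≤ k + 1 := by
  obtain ⟨hYk, hXY⟩ := hY
  unfold adjSub at hYZ
  have dim_formula := Submodule.finrank_sup_add_finrank_inf_eq Y Z
  have sup_le_dim := Submodule.finrank_mono (sup_le_sup_right hXY Z)
  omega

theorem isMaxClique_scOf_of_lt_finrank_sSup (hX : finrank F X + 1 = k)
    (h : k + 1 < finrank F ↥(sSup (scOf F n k X))) : isMaxClique F n k (scOf F n k X) := by
  refine ⟨isClique_scOf hX, fun T hT hXT => (Set.Subset.antisymm hXT fun Z hZ => ?_).symm⟩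
  refine ⟨⟨(hT.1 hZ).1, ?_⟩, hT.1 hZ⟩
  by_contra hXZ
  have adj : ∀ Y ∈ scOf F n k X, adjSub F n k Y Z := fun Y hY =>
    hT.2 (hXT hY) hZ fun hYZ => hXZ (hYZ ▸ hY.1.2)
  have span_le : sSup (scOf F n k X) ≤ X ⊔ Z :=
    sSup_le fun Y hY => le_sup_of_adjSub hX hY.1 (adj Y hY) hXZ
  obtain ⟨Y, hY⟩ : (scOf F n k X).Nonempty := by
    rw [Set.nonempty_iff_ne_empty]
    intro hempty
    rw [hempty, sSup_empty, finrank_bot] at h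
    omega
  have sup_dim := finrank_sup_le_of_adjSub hY.1 (hT.1 hZ).1 (adj Y hY)
  have span_dim := Submodule.finrank_mono span_le
  omega

lemma exists_mem_tcOf_notMem (hU : finrank F U = k + 1) {w x : Fin n → F} (hwU : w ∈ U)
    (hw : ∀ i, w i ≠ 0) (hxU : x ∈ U) (hxw : x ∉ Submodule.span F {w}) :
    ∃ Z ∈ tcOf F n k U, x ∉ Z := by
  obtain ⟨g, hgx, hwg⟩ := Submodule.exists_le_ker_of_notMem hxw
  have hwZ : w ∈ U ⊓ LinearMap.ker g := ⟨hwU, hwg (Submodule.mem_span_singleton_self w)⟩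
  have hdim := finrank_inf_ker_add_one fun h : U ≤ LinearMap.ker g => hgx (h hxU)
  have hZ : finrank F ↥(U ⊓ LinearMap.ker g) = k := by omega
  exact ⟨U ⊓ LinearMap.ker g, ⟨⟨hZ, inf_le_left⟩, hZ, fun i hi => hw i (hi hwZ)⟩,
    fun hx => hgx hx.2⟩

theorem not_isMaxClique_scOf_of_le (hU : finrank F U = k + 1) (hSU : sSup (scOf F n k X) ≤ U)
    {w x : Fin n → F} (hwU : w ∈ U) (hw : ∀ i, w i ≠ 0) (hxX : x ∈ X) (hxU : x ∈ U)
    (hxw : x ∉ Submodule.span F {w}) : ¬ isMaxClique F n k (scOf F n k X) := by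
  rintro ⟨-, hmax⟩
  obtain ⟨Z, hZ, hxZ⟩ := exists_mem_tcOf_notMem hU hwU hw hxU hxw
  have star_sub_top : scOf F n k X ⊆ tcOf F n k U := fun Y hY =>
    ⟨⟨hY.1.1, (le_sSup hY).trans hSU⟩, hY.2⟩
  have top_eq_star := hmax _ (isClique_tcOf hU) star_sub_top
  exact hxZ ((top_eq_star ▸ hZ).1.2 hxX)

end Cliques

section SpanOfStar

variable {F : Type*} [Field F] {n k : ℕ} {X Y : Submodule F (Fin n → F)}

/-- The set of coordinates vanishing on all of `X`; its cardinality is `c(X)`. -/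
def zeroCoords (X : Submodule F (Fin n → F)) : Set (Fin n) :=
  {i | X ≤ coordHyp F n i}

lemma sup_span_singleton_mem_scOf (hX : finrank F X + 1 = k) {v : Fin n → F} (hvX : v ∉ X)
    (hv : ∀ i ∈ zeroCoords X, v i ≠ 0) : X ⊔ Submodule.span F {v} ∈ scOf F n k X := by
  have hdim : finrank F ↥(X ⊔ Submodule.span F {v}) = k := by
    rw [Submodule.finrank_sup_span_singleton hvX, hX]
  refine ⟨⟨hdim, le_sup_left⟩, hdim, fun i hi => hv i (le_sup_left.trans hi) ?_⟩
  exact hi (Submodule.mem_sup_right (Submodule.mem_span_singleton_self v))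

lemma scOf_nonempty (hX : finrank F X + 1 = k) (hXtop : X ≠ ⊤) : (scOf F n k X).Nonempty := by
  suffices ∃ v ∉ X, ∀ i ∈ zeroCoords X, v i ≠ 0 by
    obtain ⟨v, hvX, hv⟩ := this
    exact ⟨_, sup_span_singleton_mem_scOf hX hvX hv⟩
  by_cases h1 : 1 ∈ X
  · obtain ⟨v, -, hvX⟩ := SetLike.exists_of_lt hXtop.lt_top
    exact ⟨v, hvX, fun i hi => (one_ne_zero (mem_coordHyp.1 (hi h1))).elim⟩
  · exact ⟨1, h1, fun _ _ => one_ne_zero⟩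

lemma le_sSup_scOf (hX : finrank F X + 1 = k) (hXtop : X ≠ ⊤) : X ≤ sSup (scOf F n k X) := by
  obtain ⟨Y, hY⟩ := scOf_nonempty hX hXtop
  exact hY.1.2.trans (le_sSup hY)

lemma mem_sSup_scOf (hX : finrank F X + 1 = k) (hXtop : X ≠ ⊤) {v : Fin n → F}
    (hv : ∀ i ∈ zeroCoords X, v i ≠ 0) : v ∈ sSup (scOf F n k X) := by
  by_cases hvX : v ∈ X
  · exact le_sSup_scOf hX hXtop hvX
  · exact le_sSup (sup_span_singleton_mem_scOf hX hvX hv)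
      (Submodule.mem_sup_right (Submodule.mem_span_singleton_self v))

lemma constOn_zeroCoords_le_sSup_scOf (hX : finrank F X + 1 = k) (hXtop : X ≠ ⊤) :
    constOn F (zeroCoords X) ≤ sSup (scOf F n k X) := by
  intro v hv
  by_cases hne : ∀ i ∈ zeroCoords X, v i ≠ 0
  · exact mem_sSup_scOf hX hXtop hne
  push Not at hne
  obtain ⟨j, hj, hvj⟩ := hne
  have h1 : (1 : Fin n → F) ∈ sSup (scOf F n k X) :=
    mem_sSup_scOf hX hXtop fun _ _ => one_ne_zero
  have hv1 : v + 1 ∈ sSup (scOf F n k X) := mem_sSup_scOf hX hXtop fun i hi => by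
    simp [hv i hi j hj, hvj]
  simpa using sub_mem hv1 h1

lemma inf_coordHyp_eq (hX : finrank F X + 1 = k) (hY : Y ∈ scOf F n k X) {i : Fin n}
    (hi : i ∈ zeroCoords X) : Y ⊓ coordHyp F n i = X := by
  obtain ⟨⟨hYk, hXY⟩, -, hYnd⟩ := hY
  have hdim : finrank F ↥(Y ⊓ coordHyp F n i) + 1 = finrank F Y := finrank_inf_ker_add_one (hYnd i)
  exact (Submodule.eq_of_le_of_finrank_eq (le_inf hXY hi) (by omega)).symm

lemma apply_eq_zero_iff_mem (hX : finrank F X + 1 = k) (hY : Y ∈ scOf F n k X) {i : Fin n}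
    (hi : i ∈ zeroCoords X) {y : Fin n → F} (hy : y ∈ Y) : y i = 0 ↔ y ∈ X := by
  rw [← inf_coordHyp_eq hX hY hi, Submodule.mem_inf, mem_coordHyp, and_iff_right hy]

end SpanOfStar

section Binary

variable {n k : ℕ} {X : Submodule (ZMod 2) (Fin n → ZMod 2)}

lemma zmod_two_eq_iff {a b : ZMod 2} : a = b ↔ (a = 0 ↔ b = 0) := by
  decide +revert

theorem sSup_scOf_eq_constOn (hX : finrank (ZMod 2) X + 1 = k) (hXtop : X ≠ ⊤) :
    sSup (scOf (ZMod 2) n k X) = constOn (ZMod 2) (zeroCoords X) := by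
  refine le_antisymm (sSup_le fun Y hY y hy i hi j hj => ?_)
    (constOn_zeroCoords_le_sSup_scOf hX hXtop)
  rw [zmod_two_eq_iff, apply_eq_zero_iff_mem hX hY hi hy, apply_eq_zero_iff_mem hX hY hj hy]

lemma finrank_sSup_scOf (hX : finrank (ZMod 2) X + 1 = k) (hXtop : X ≠ ⊤) :
    finrank (ZMod 2) ↥(sSup (scOf (ZMod 2) n k X)) = n - (numHyp (ZMod 2) n X - 1) := by
  rw [sSup_scOf_eq_constOn hX hXtop, finrank_constOn, Fintype.card_fin, numHyp, zeroCoords]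

theorem isMaxClique_scOf_iff_lt_finrank_sSup (hk : 1 < k) (hkn : k + 1 < n)
    (hX : finrank (ZMod 2) X + 1 = k) :
    isMaxClique (ZMod 2) n k (scOf (ZMod 2) n k X) ↔
      k + 1 < finrank (ZMod 2) ↥(sSup (scOf (ZMod 2) n k X)) := by
  refine ⟨fun hmax => ?_, isMaxClique_scOf_of_lt_finrank_sSup hX⟩
  by_contra! hsmall
  have hXtop : X ≠ ⊤ :=
    (Submodule.lt_top_of_finrank_lt_finrank (by rw [finrank_fin_fun]; omega)).ne
  obtain ⟨j, hj⟩ : (zeroCoords X).Nonempty := by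
    by_contra! hempty
    rw [sSup_scOf_eq_constOn hX hXtop, hempty, constOn_empty, finrank_top,
      finrank_fin_fun] at hsmall
    omega
  obtain ⟨U, hSU, hU⟩ := exists_ge_finrank_eq _ hsmall (by rw [finrank_fin_fun]; omega)
  have h1U : 1 ∈ U := hSU (mem_sSup_scOf hX hXtop fun _ _ => one_ne_zero)
  obtain ⟨x, hxX, hx0⟩ := X.exists_mem_ne_zero_of_ne_bot
    (Submodule.one_le_finrank_iff.1 (by omega))
  exact not_isMaxClique_scOf_of_le hU hSU h1U (fun _ => one_ne_zero) hxX
    (hSU (le_sSup_scOf hX hXtop hxX))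
    (notMem_span_singleton_of_apply_eq_zero hx0 (hj hxX) one_ne_zero) hmax

end Binary

/-- For `V = F_2^n` and `1 < k < n-1`, for a `(k-1)`-dimensional
subspace `X ⊂ V`, the set `S^c(X)` is a maximal clique of `Γ(n,k)_2` if and only if
`c(X) ≤ n - k - 1`. -/
theorem stmt_3 (n k : ℕ) (hk : 1 < k) (hkn : k < n - 1)
    (X : Submodule (ZMod 2) (Fin n → ZMod 2))
    (hX : Module.finrank (ZMod 2) ↥X = k - 1) :
    isMaxClique (ZMod 2) n k (scOf (ZMod 2) n k X) ↔ numHyp (ZMod 2) n X ≤ n - k - 1 := by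
  have hXk : finrank (ZMod 2) X + 1 = k := by omega
  have hXtop : X ≠ ⊤ :=
    (Submodule.lt_top_of_finrank_lt_finrank (by rw [finrank_fin_fun]; omega)).ne
  rw [isMaxClique_scOf_iff_lt_finrank_sSup hk (by omega) hXk, finrank_sSup_scOf hXk hXtop]
  omega
end

section
/- Let q be a prime power, 1 < k < n−1, and let X ⊂ V be a (k−1)-dimensional subspace with c(X) ≥ 1. Then the set S^c(X) has exactly (q−1)^{c(X)−1} · q^{n−k−c(X)+1} elements. -/
/-!
The `k`-dimensional subspaces containing `X` are the lines of `V ⧸ X`. A coordinate hyperplane not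
containing `X` contains none of these subspaces, and the coordinate functionals vanishing on `X`
descend to `c = c(X)` linearly independent functionals on the `(n - k + 1)`-dimensional quotient.
A line on which none of these vanishes has a unique vector at which a chosen one takes the value
`1`. So one counts the vectors sent by the surjection `V ⧸ X → F ^ c` to tuples with a `1` in the
chosen position and nonzero entries elsewhere: there are `(q - 1) ^ (c - 1)` such tuples, and every
fibre has `q ^ (n - k + 1 - c)` elements.
-/

open Module

theorem ncard_preimage_of_surjective {G H : Type*} [AddGroup G] [AddGroup H] {f : G →+ H}
    (hf : Function.Surjective f) (T : Set H) :
    (f ⁻¹' T).ncard = T.ncard * Nat.card f.ker := by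
  have fiberwise : f ⁻¹' T ≃ T × f.ker :=
    (Equiv.sigmaSubtypeFiberEquivSubtype f fun _ ↦ Iff.rfl).symm.trans
      (Equiv.sigmaEquivProdOfEquiv fun y ↦ AddMonoidHom.fiberEquivKerOfSurjective hf y.1)
  rw [← Nat.card_coe_set_eq, Nat.card_congr fiberwise, Nat.card_prod, Nat.card_coe_set_eq]

theorem ncard_setOf_apply_eq_one_and_forall_ne_zero {ι M : Type*} [Finite ι] [Finite M]
    [MonoidWithZero M] [Nontrivial M] (i₀ : ι) :
    {x : ι → M | x i₀ = 1 ∧ ∀ i, x i ≠ 0}.ncard = (Nat.card M - 1) ^ (Nat.card ι - 1) := by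
  classical
  have := Fintype.ofFinite ι
  have as_pi : {x : ι → M | x i₀ = 1 ∧ ∀ i, x i ≠ 0} =
      Set.univ.pi (Function.update (fun _ ↦ {0}ᶜ) i₀ {1}) := by
    ext x
    simp only [Set.mem_ofPred_eq, Set.mem_univ_pi]
    refine ⟨fun h i ↦ ?_, fun h ↦ ?_⟩
    · obtain rfl | hi := eq_or_ne i i₀ <;> simp [*]
    · have h₁ : x i₀ = 1 := by simpa using h i₀
      refine ⟨h₁, fun i ↦ ?_⟩
      obtain rfl | hi := eq_or_ne i i₀
      · simp [h₁]
      · simpa [hi] using h i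
  rw [as_pi, ← Nat.card_coe_set_eq, Nat.card_congr (Equiv.Set.univPi _), Nat.card_pi]
  simp only [Nat.card_coe_set_eq]
  simp_rw [Function.apply_update (fun _ ↦ Set.ncard)]
  rw [Finset.prod_update_of_mem (Finset.mem_univ i₀)]
  simp [Set.ncard_compl {(0 : M)}, Finset.card_sdiff]

section Functionals

variable {K V ι : Type*} [Field K] [AddCommGroup V] [Module K V]

theorem surjective_pi_of_linearIndependent [Finite ι] {φ : ι → Dual K V}
    (hφ : LinearIndependent K φ) : Function.Surjective (LinearMap.pi φ) := by
  classical
  have := Fintype.ofFinite ι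
  rw [← LinearMap.dualMap_injective_iff, ← LinearMap.ker_eq_bot, LinearMap.ker_eq_bot']
  intro a ha
  have relation : ∑ i, a (Pi.single i 1) • φ i = 0 := by
    ext v
    have pi_apply : LinearMap.pi φ v = ∑ i, φ i v • Pi.single i 1 := pi_eq_sum_univ' _
    simpa [pi_apply, mul_comm] using congr($ha v)
  refine LinearMap.pi_ext' fun i ↦ LinearMap.ext_ring ?_
  exact Fintype.linearIndependent_iff.mp hφ _ relation i

theorem ncard_setOf_eq_one_and_forall_ne_zero [Finite K] [FiniteDimensional K V] [Finite ι]
    {φ : ι → Dual K V} (hφ : LinearIndependent K φ) (i₀ : ι) :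
    {v | φ i₀ v = 1 ∧ ∀ i, φ i v ≠ 0}.ncard =
      (Nat.card K - 1) ^ (Nat.card ι - 1) * Nat.card K ^ (finrank K V - Nat.card ι) := by
  have hsurj := surjective_pi_of_linearIndependent hφ
  have finrank_ker : finrank K (LinearMap.pi φ).ker = finrank K V - Nat.card ι := by
    have := Fintype.ofFinite ι
    rw [← (LinearMap.pi φ).finrank_range_add_finrank_ker, LinearMap.range_eq_top.mpr hsurj,
      finrank_top, finrank_fintype_fun_eq_card, Nat.card_eq_fintype_card, Nat.add_sub_cancel_left]
  rw [← ncard_setOf_apply_eq_one_and_forall_ne_zero i₀, ← finrank_ker,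
    ← Module.natCard_eq_pow_finrank]
  exact ncard_preimage_of_surjective (f := (LinearMap.pi φ).toAddMonoidHom) hsurj
    {x | x i₀ = 1 ∧ ∀ i, x i ≠ 0}

theorem bijOn_span_singleton_isAtom (φ : ι → Dual K V) (i₀ : ι) :
    Set.BijOn (fun v ↦ Submodule.span K {v}) {v | φ i₀ v = 1 ∧ ∀ i, φ i v ≠ 0}
      {L | IsAtom L ∧ ∀ i, ¬ L ≤ LinearMap.ker (φ i)} := by
  refine ⟨fun v ⟨_, hv⟩ ↦ ⟨?_, fun i ↦ ?_⟩, fun v ⟨hv, _⟩ w ⟨hw, _⟩ hvw ↦ ?_, ?_⟩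
  · exact nonzero_span_atom v fun h ↦ hv i₀ (by simp [h])
  · simpa using hv i
  · obtain ⟨a, rfl⟩ : ∃ a : K, a • v = w := by
      rw [← Submodule.mem_span_singleton]
      exact hvw.ge (Submodule.mem_span_singleton_self w)
    have ha : a = 1 := by simpa [hv] using hw
    rw [ha, one_smul]
  · rintro L ⟨hL, hLφ⟩
    obtain ⟨v, -, rfl⟩ := (atom_iff_nonzero_span L).mp hL
    have hv : ∀ i, φ i v ≠ 0 := by simpa using hLφ
    refine ⟨(φ i₀ v)⁻¹ • v, by simp [hv], ?_⟩
    exact Submodule.span_singleton_smul_eq (inv_ne_zero (hv i₀)).isUnit v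

theorem ncard_isAtom_and_forall_not_le_ker [Finite K] [FiniteDimensional K V] [Finite ι]
    [Nonempty ι] {φ : ι → Dual K V} (hφ : LinearIndependent K φ) :
    {L : Submodule K V | IsAtom L ∧ ∀ i, ¬ L ≤ LinearMap.ker (φ i)}.ncard =
      (Nat.card K - 1) ^ (Nat.card ι - 1) * Nat.card K ^ (finrank K V - Nat.card ι) := by
  obtain ⟨i₀⟩ := ‹Nonempty ι›
  rw [← (bijOn_span_singleton_isAtom φ i₀).ncard_eq, ncard_setOf_eq_one_and_forall_ne_zero hφ]

end Functionals

section Quotient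

variable {R M N ι : Type*}

theorem isAtom_iff_covBy_comap_mkQ [Ring R] [AddCommGroup M] [Module R M] {X : Submodule R M}
    {L : Submodule R (M ⧸ X)} : IsAtom L ↔ X ⋖ L.comap X.mkQ := by
  rw [← (Submodule.comapMkQRelIso X).isAtom_iff, Set.Ici.isAtom_iff]
  rfl

theorem bijOn_comap_mkQ [Ring R] [AddCommGroup M] [Module R M] [AddCommGroup N] [Module R N]
    {X : Submodule R M} {φ : ι → M →ₗ[R] N} (hX : ∀ i, X ≤ LinearMap.ker (φ i)) :
    Set.BijOn (Submodule.comap X.mkQ)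
      {L | IsAtom L ∧ ∀ i, ¬ L ≤ LinearMap.ker (X.liftQ (φ i) (hX i))}
      {Y | X ⋖ Y ∧ ∀ i, ¬ Y ≤ LinearMap.ker (φ i)} := by
  have comap_le {L : Submodule R (M ⧸ X)} (i : ι) : L.comap X.mkQ ≤ LinearMap.ker (φ i) ↔
      L ≤ LinearMap.ker (X.liftQ (φ i) (hX i)) := by
    rw [← Submodule.comap_le_comap_iff_of_surjective X.mkQ_surjective, ← LinearMap.ker_comp,
      Submodule.liftQ_mkQ]
  refine ⟨fun L ⟨hL, hLφ⟩ ↦ ⟨isAtom_iff_covBy_comap_mkQ.mp hL, fun i ↦ ?_⟩,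
    (Submodule.comap_injective_of_surjective X.mkQ_surjective).injOn, fun Y ⟨hY, hYφ⟩ ↦ ?_⟩
  · exact (comap_le i).not.mpr (hLφ i)
  · obtain ⟨L, rfl⟩ : ∃ L : Submodule R (M ⧸ X), L.comap X.mkQ = Y :=
      ⟨Y.map X.mkQ, by simpa [Submodule.comap_map_mkQ] using hY.le⟩
    exact ⟨L, ⟨isAtom_iff_covBy_comap_mkQ.mpr hY, fun i ↦ (comap_le i).not.mp (hYφ i)⟩, rfl⟩

theorem linearIndependent_liftQ [CommRing R] [AddCommGroup M] [Module R M] {X : Submodule R M}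
    {φ : ι → Dual R M} (hφ : LinearIndependent R φ) (hX : ∀ i, X ≤ LinearMap.ker (φ i)) :
    LinearIndependent R fun i ↦ X.liftQ (φ i) (hX i) := by
  refine LinearIndependent.of_comp (LinearMap.dualMap X.mkQ) ?_
  have dualMap_liftQ : LinearMap.dualMap X.mkQ ∘ (fun i ↦ X.liftQ (φ i) (hX i)) = φ :=
    funext fun i ↦ X.liftQ_mkQ (φ i) (hX i)
  rwa [dualMap_liftQ]

theorem covBy_iff_finrank_eq_add_one [DivisionRing R] [AddCommGroup M] [Module R M]
    {X Y : Submodule R M} [FiniteDimensional R Y] :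
    X ⋖ Y ↔ X ≤ Y ∧ finrank R Y = finrank R X + 1 := by
  refine (and_iff_right_of_imp CovBy.le).symm.trans (and_congr_right fun hXY ↦ ?_)
  rw [covBy_iff_quot_is_simple hXY, isSimpleModule_iff_finrank_eq_one,
    ← (Submodule.comap Y.subtype X).finrank_quotient_add_finrank,
    (Submodule.comapSubtypeEquivOfLe hXY).finrank_eq]
  omega

end Quotient

theorem linearIndependent_proj {R ι : Type*} [CommRing R] :
    LinearIndependent R (LinearMap.proj : ι → (ι → R) →ₗ[R] R) := by
  classical
  refine linearIndependent_iff'.mpr fun s a ha i hi ↦ ?_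
  simpa [LinearMap.sum_apply, Pi.single_apply, hi] using congr($ha (Pi.single i 1))

theorem scOf_eq_setOf_covBy {F : Type*} [Field F] {n k : ℕ} {X : Submodule F (Fin n → F)}
    (hX : finrank F X + 1 = k) :
    scOf F n k X = {Y | X ⋖ Y ∧ ∀ i, ¬ Y ≤ coordHyp F n i} := by
  ext Y
  simp only [scOf, starOf, ndCodes, Set.mem_inter_iff, Set.mem_ofPred_eq,
    covBy_iff_finrank_eq_add_one, hX]
  tauto

theorem stmt_5_general {K V ι : Type*} [Field K] [Finite K] [AddCommGroup V] [Module K V]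
    [FiniteDimensional K V] {φ : ι → Dual K V} {X : Submodule K V}
    (hφ : LinearIndepOn K φ {i | X ≤ LinearMap.ker (φ i)})
    (hne : {i | X ≤ LinearMap.ker (φ i)}.Nonempty) :
    {Y | X ⋖ Y ∧ ∀ i, ¬ Y ≤ LinearMap.ker (φ i)}.ncard =
      (Nat.card K - 1) ^ ({i | X ≤ LinearMap.ker (φ i)}.ncard - 1) *
        Nat.card K ^ (finrank K (V ⧸ X) - {i | X ≤ LinearMap.ker (φ i)}.ncard) := by
  set I := {i | X ≤ LinearMap.ker (φ i)}
  have : Finite I := LinearIndependent.finite hφ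
  have : Nonempty I := hne.to_subtype
  have restrict_index : {Y | X ⋖ Y ∧ ∀ i, ¬ Y ≤ LinearMap.ker (φ i)} =
      {Y | X ⋖ Y ∧ ∀ i : I, ¬ Y ≤ LinearMap.ker (φ i)} :=
    Set.ext fun Y ↦ and_congr_right fun hXY ↦
      ⟨fun h i ↦ h i, fun h i hi ↦ h ⟨i, hXY.le.trans hi⟩ hi⟩
  have hX (i : I) : X ≤ LinearMap.ker (φ i) := i.2
  rw [restrict_index, ← (bijOn_comap_mkQ hX).ncard_eq,
    ncard_isAtom_and_forall_not_le_ker (linearIndependent_liftQ hφ hX), Nat.card_coe_set_eq]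

/-- For `1 < k < n-1` and a `(k-1)`-dimensional subspace `X ⊂ V` with
`c(X) ≥ 1`, the set `S^c(X)` has exactly `(q-1)^{c(X)-1} · q^{n-k-c(X)+1}` elements.
(The exponent `n-k-c(X)+1` is written as `n-k+1-c(X)` to be meaningful in `ℕ`.) -/
theorem stmt_5 (q n k : ℕ) (F : Type*) [Field F] [Fintype F]
    (hF : Fintype.card F = q) (hk : 1 < k) (hkn : k < n - 1)
    (X : Submodule F (Fin n → F)) (hX : Module.finrank F ↥X = k - 1)
    (hc : 1 ≤ numHyp F n X) :
    (scOf F n k X).ncard =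
      (q - 1) ^ (numHyp F n X - 1) * q ^ (n - k + 1 - numHyp F n X) := by
  have scOf_eq : scOf F n k X = {Y | X ⋖ Y ∧ ∀ i, ¬ Y ≤ coordHyp F n i} :=
    scOf_eq_setOf_covBy (by omega)
  have codim : finrank F ((Fin n → F) ⧸ X) = n - k + 1 := by
    rw [Submodule.finrank_quotient, Module.finrank_fin_fun]
    omega
  rw [scOf_eq, ← hF, ← Nat.card_eq_fintype_card, ← codim]
  exact stmt_5_general (linearIndependent_proj.linearIndepOn _)
    (Set.nonempty_of_ncard_ne_zero (Nat.one_le_iff_ne_zero.mp hc))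
end

section
/- Let q be a prime power, 1 < k < n−1, and Y ∈ C(n,k+1)_q. Then for every i ∈ {1,…,n} the subspace Y ∩ C_i is k-dimensional; moreover, if n(Y) denotes the number of distinct subspaces in the collection Y ∩ C_1, …, Y ∩ C_n, then k+1 ≤ n(Y) ≤ n and the set T^c(Y) has exactly [k+1]_q − n(Y) elements. -/
/-!
Inside the `(k+1)`-dimensional space `Y` the coordinate functionals are nonzero, so their kernels
`Y ∩ C_i` are hyperplanes of `Y`. A vector of `Y` annihilated by one functional for each of these
`n(Y)` hyperplanes lies in all of them, hence is zero; so `Y` embeds into `F ^ n(Y)`, which gives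
`k + 1 ≤ n(Y)`. A hyperplane of `Y` is degenerate exactly when it equals some `Y ∩ C_i`, and by
duality `Y` has `[k+1]_q` hyperplanes, one for each point of the projective space of `Y*`.
-/

open Module LinearMap Projectivization

section Functionals

variable {F V : Type*} [Field F] [AddCommGroup V] [Module F V]

theorem finrank_inf_ker_of_finrank_eq_succ {k : ℕ} {Y : Submodule F V} {f : Dual F V}
    (hY : finrank F Y = k + 1) (hf : ¬ Y ≤ ker f) : finrank F ↥(Y ⊓ ker f) = k := by
  have := Module.finite_of_finrank_eq_succ hY
  have hne : f.domRestrict Y ≠ 0 := fun h => hf fun x hx => LinearMap.congr_fun h ⟨x, hx⟩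
  have hker : finrank F (ker (f.domRestrict Y)) = k :=
    Nat.succ_injective ((Dual.finrank_ker_add_one_of_ne_zero hne).trans hY)
  rwa [ker_domRestrict, ← Submodule.finrank_map_subtype_eq, Submodule.map_comap_subtype] at hker

theorem le_ker_iff_inf_ker_eq {k : ℕ} {Y Z : Submodule F V} {f : Dual F V}
    (hY : finrank F Y = k + 1) (hf : ¬ Y ≤ ker f) (hZ : finrank F Z = k) (hZY : Z ≤ Y) :
    Z ≤ ker f ↔ Y ⊓ ker f = Z := by
  have := Module.finite_of_finrank_eq_succ hY
  refine ⟨fun hZf => (Submodule.eq_of_le_of_finrank_eq (le_inf hZY hZf) ?_).symm,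
    fun h => h ▸ inf_le_right⟩
  rw [hZ, finrank_inf_ker_of_finrank_eq_succ hY hf]

theorem finrank_le_card_of_disjoint_iInf_ker {ι : Type*} [Finite ι] (f : ι → Dual F V)
    {Y : Submodule F V} (hY : Disjoint Y (⨅ i, ker (f i))) : finrank F Y ≤ Nat.card ι := by
  have := Fintype.ofFinite ι
  have hinj : Function.Injective ((LinearMap.pi f).domRestrict Y) := by
    rwa [injective_domRestrict_iff, ker_pi]
  simpa using finrank_le_finrank_of_injective hinj

theorem finrank_le_ncard_range_inf_ker {ι : Type*} [Finite ι] (f : ι → Dual F V)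
    {Y : Submodule F V} (hY : Disjoint Y (⨅ i, ker (f i))) :
    finrank F Y ≤ (Set.range fun i => Y ⊓ ker (f i)).ncard := by
  set hyperplane : ι → Submodule F V := fun i => Y ⊓ ker (f i)
  let rep : Set.range hyperplane → ι := Set.rangeSplitting hyperplane
  rw [← Nat.card_coe_set_eq]
  refine finrank_le_card_of_disjoint_iInf_ker (fun H => f (rep H)) ?_
  rw [Submodule.disjoint_def] at hY ⊢
  intro x hxY hx
  refine hY x hxY ((Submodule.mem_iInf _).2 fun i => ?_)
  have hrep : hyperplane (rep ⟨hyperplane i, i, rfl⟩) = hyperplane i :=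
    Set.apply_rangeSplitting hyperplane _
  have hmem : x ∈ hyperplane i := hrep ▸ ⟨hxY, (Submodule.mem_iInf _).1 hx _⟩
  exact hmem.2

end Functionals

section HyperplaneCount

variable {F V : Type*} [Field F] [AddCommGroup V] [Module F V] {k : ℕ}

/-- Projective duality: the hyperplanes of a `(k+1)`-dimensional space are the points of the
projective space of its dual, a hyperplane corresponding to the line of functionals vanishing
on it. -/
noncomputable def hyperplaneEquivProjectivizationDual [FiniteDimensional F V]
    (hV : finrank F V = k + 1) :
    {H : Submodule F V // finrank F H = k} ≃ Projectivization F (Dual F V) :=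
  ((Subspace.orderIsoFiniteDimensional.toEquiv.trans OrderDual.ofDual).subtypeEquiv fun H => by
    have hdim := Subspace.finrank_add_finrank_dualAnnihilator_eq H
    change _ ↔ finrank F H.dualAnnihilator = 1
    omega).trans (equivSubmodule F (Dual F V)).symm

theorem ncard_hyperplanes [Finite F] (hV : finrank F V = k + 1) :
    {H : Submodule F V | finrank F H = k}.ncard = gaussNum (Nat.card F) (k + 1) := by
  have := Module.finite_of_finrank_eq_succ hV
  rw [← Nat.card_coe_set_eq, Set.coe_ofPred,
    Nat.card_congr (hyperplaneEquivProjectivizationDual hV),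
    card_of_finrank F (Dual F V) (Subspace.dual_finrank_eq.trans hV), gaussNum]

theorem image_map_subtype_setOf_finrank_eq (Y : Submodule F V) (k : ℕ) :
    Submodule.map Y.subtype '' {H | finrank F H = k} =
      {Z : Submodule F V | finrank F Z = k ∧ Z ≤ Y} := by
  ext Z
  constructor
  · rintro ⟨H, hH, rfl⟩
    exact ⟨(Submodule.finrank_map_subtype_eq Y H).trans hH, Submodule.map_subtype_le Y H⟩
  · rintro ⟨hZ, hZY⟩
    have hmap : (Z.comap Y.subtype).map Y.subtype = Z := by
      rw [Submodule.map_comap_subtype, inf_of_le_right hZY]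
    refine ⟨Z.comap Y.subtype, ?_, hmap⟩
    rw [Set.mem_ofPred_eq, ← Submodule.finrank_map_subtype_eq, hmap, hZ]

theorem ncard_hyperplanes_submodule [Finite F] {Y : Submodule F V} (hY : finrank F Y = k + 1) :
    {Z : Submodule F V | finrank F Z = k ∧ Z ≤ Y}.ncard = gaussNum (Nat.card F) (k + 1) := by
  rw [← image_map_subtype_setOf_finrank_eq,
    Set.ncard_image_of_injective _ (Submodule.map_injective_of_injective Y.subtype_injective),
    ncard_hyperplanes hY]

theorem ncard_nondegenerate_add_ncard_range_inf_ker [Finite F] {ι : Type*}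
    {f : ι → Dual F V} {Y : Submodule F V} (hY : finrank F Y = k + 1)
    (hf : ∀ i, ¬ Y ≤ ker (f i)) :
    {Z : Submodule F V | finrank F Z = k ∧ Z ≤ Y ∧ ∀ i, ¬ Z ≤ ker (f i)}.ncard +
      (Set.range fun i => Y ⊓ ker (f i)).ncard = gaussNum (Nat.card F) (k + 1) := by
  set hyperplanes : Set (Submodule F V) := {Z : Submodule F V | finrank F Z = k ∧ Z ≤ Y}
  set degenerate : Set (Submodule F V) := Set.range fun i => Y ⊓ ker (f i)
  have hcard : hyperplanes.ncard = gaussNum (Nat.card F) (k + 1) := ncard_hyperplanes_submodule hY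
  have hfin : hyperplanes.Finite := Set.finite_of_ncard_ne_zero <| by
    rw [hcard, gaussNum, Finset.sum_range_succ']
    simp
  have hsub : degenerate ⊆ hyperplanes := by
    rintro _ ⟨i, rfl⟩
    exact ⟨finrank_inf_ker_of_finrank_eq_succ hY (hf i), inf_le_left⟩
  have hdiff : {Z : Submodule F V | finrank F Z = k ∧ Z ≤ Y ∧ ∀ i, ¬ Z ≤ ker (f i)} =
      hyperplanes \ degenerate := by
    ext Z
    simp only [Set.mem_ofPred_eq, Set.mem_sdiff, Set.mem_range, not_exists, ← and_assoc,
      hyperplanes, degenerate]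
    exact and_congr_right fun ⟨hZ, hZY⟩ => forall_congr' fun i =>
      not_congr (le_ker_iff_inf_ker_eq hY (hf i) hZ hZY)
  rw [hdiff, Set.ncard_sdiff_add_ncard_of_subset hsub hfin, hcard]

end HyperplaneCount

theorem iInf_coordHyp (F : Type*) [Field F] (n : ℕ) : ⨅ i, coordHyp F n i = ⊥ :=
  iInf_ker_proj

theorem tcOf_eq_setOf (F : Type*) [Field F] (n k : ℕ) (Y : Submodule F (Fin n → F)) :
    tcOf F n k Y =
      {Z : Submodule F (Fin n → F) | finrank F Z = k ∧ Z ≤ Y ∧ ∀ i, ¬ Z ≤ coordHyp F n i} :=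
  Set.ext fun _ => ⟨fun ⟨⟨hZ, hZY⟩, _, hnd⟩ => ⟨hZ, hZY, hnd⟩,
    fun ⟨hZ, hZY, hnd⟩ => ⟨⟨hZ, hZY⟩, hZ, hnd⟩⟩

theorem stmt_6_general {F V ι : Type*} [Field F] [Finite F] [AddCommGroup V] [Module F V]
    [Finite ι] {k : ℕ} (f : ι → Dual F V) {Y : Submodule F V} (hY : finrank F Y = k + 1)
    (hf : ∀ i, ¬ Y ≤ ker (f i)) (hdisj : Disjoint Y (⨅ i, ker (f i))) :
    (∀ i, finrank F ↥(Y ⊓ ker (f i)) = k) ∧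
    k + 1 ≤ (Set.range fun i => Y ⊓ ker (f i)).ncard ∧
    (Set.range fun i => Y ⊓ ker (f i)).ncard ≤ Nat.card ι ∧
    {Z : Submodule F V | finrank F Z = k ∧ Z ≤ Y ∧ ∀ i, ¬ Z ≤ ker (f i)}.ncard +
      (Set.range fun i => Y ⊓ ker (f i)).ncard = gaussNum (Nat.card F) (k + 1) :=
  ⟨fun i => finrank_inf_ker_of_finrank_eq_succ hY (hf i),
    hY ▸ finrank_le_ncard_range_inf_ker f hdisj,
    Nat.card_coe_set_eq (Set.range _) ▸ Finite.card_range_le _,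
    ncard_nondegenerate_add_ncard_range_inf_ker hY hf⟩

/-- For `Y ∈ C(n,k+1)_q` each `Y ∩ C_i` is `k`-dimensional, the number
`n(Y)` of distinct subspaces among `Y ∩ C_1, …, Y ∩ C_n` satisfies `k+1 ≤ n(Y) ≤ n`,
and `T^c(Y)` has exactly `[k+1]_q - n(Y)` elements. -/
theorem stmt_6 (q n k : ℕ) (F : Type*) [Field F] [Fintype F]
    (hF : Fintype.card F = q) (hk : 1 < k) (hkn : k < n - 1)
    (Y : Submodule F (Fin n → F)) (hY : Y ∈ ndCodes F n (k + 1)) :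
    (∀ i : Fin n, Module.finrank F ↥(Y ⊓ coordHyp F n i) = k) ∧
    k + 1 ≤ (Set.range fun i : Fin n => Y ⊓ coordHyp F n i).ncard ∧
    (Set.range fun i : Fin n => Y ⊓ coordHyp F n i).ncard ≤ n ∧
    (tcOf F n k Y).ncard =
      gaussNum q (k + 1) - (Set.range fun i : Fin n => Y ⊓ coordHyp F n i).ncard := by
  have hdisj : Disjoint Y (⨅ i, coordHyp F n i) := iInf_coordHyp F n ▸ disjoint_bot_right
  obtain ⟨hdim, hlower, hupper, hcount⟩ :=
    stmt_6_general (LinearMap.proj : Fin n → Dual F (Fin n → F)) hY.1 hY.2 hdisj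
  refine ⟨hdim, hlower, hupper.trans_eq (Nat.card_fin n), ?_⟩
  rw [tcOf_eq_setOf, ← hF, ← Nat.card_eq_fintype_card]
  exact Nat.eq_sub_of_add_eq hcount
end

section
/- Let q be a prime power and 1 < k < n−1. The following two conditions are equivalent: (a) for every Y ∈ C(n,k+1)_q, the set T^c(Y) is a maximal clique of Γ(n,k)_q; (b) [k+1]_q − (q+1) > n. -/
/-!
Describe a code as the range of an injective linear map `φ : E → F^n`. Its coordinates are the
functionals `proj i ∘ φ` on `E`, and the image of a hyperplane `ker f` of `E` is degenerate exactly
when one of these coordinates spans the same line of the dual space as `f`.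

A code `X` not contained in `Y` and adjacent to every member of a nonempty `T^c(Y)` meets all of
them in `X ∩ Y`. So if `T^c(Y)` is not maximal, then some `(k-1)`-dimensional `U ≤ Y` lies in all of
its members, which says that the `n` coordinates of `Y` represent every point of the projective
space of the dual of `Y` off the line formed by the functionals vanishing on `U`. There are
`[k+1]_q - [2]_q` such points, so this number is at most `n`. Conversely, if it is at most `n`, take
`n` functionals representing all these points as the coordinates of a code `Y`. Then `U` is a
non-degenerate subspace common to all members of `T^c(Y)`, and for any vector `v` outside `Y` the
code spanned by `U` and `v` extends the clique.
-/

open scoped LinearAlgebra.Projectivization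

section Subspaces

variable {K V : Type*} [DivisionRing K] [AddCommGroup V] [Module K V]

theorem exists_submodule_finrank_eq {r : ℕ} (hr : r ≤ Module.finrank K V) :
    ∃ U : Submodule K V, Module.finrank K U = r := by
  obtain ⟨v, hv⟩ := exists_linearIndependent_of_le_finrank hr
  exact ⟨Submodule.span K (Set.range v), by simpa using finrank_span_eq_card hv⟩

theorem range_projectivization_map_subtype (A : Submodule K V) :
    Set.range (Projectivization.map A.subtype A.injective_subtype) = {p | p.submodule ≤ A} := by
  ext p
  constructor
  · rintro ⟨a, rfl⟩
    induction a using Projectivization.ind with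
    | h v _ => simp [Projectivization.map_mk]
  · induction p using Projectivization.ind with
    | h v hv =>
      intro hvA
      rw [Set.mem_ofPred_eq, Projectivization.submodule_mk, Submodule.span_singleton_le_iff_mem]
        at hvA
      exact ⟨Projectivization.mk K ⟨v, hvA⟩ (by simpa using hv), rfl⟩

variable [FiniteDimensional K V]

theorem finrank_inf_lt_of_not_le {X Y : Submodule K V} (h : ¬ X ≤ Y) :
    Module.finrank K ↥(X ⊓ Y) < Module.finrank K X :=
  Submodule.finrank_lt_finrank_of_lt (inf_lt_left.2 h)

theorem finrank_inf_add_two_of_ne {X Z Y : Submodule K V} (hXY : X ≤ Y) (hZY : Z ≤ Y)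
    (hX : Module.finrank K X + 1 = Module.finrank K Y)
    (hZ : Module.finrank K Z + 1 = Module.finrank K Y) (hne : X ≠ Z) :
    Module.finrank K ↥(X ⊓ Z) + 2 = Module.finrank K Y := by
  have hXZ : ¬ X ≤ Z := fun hle => hne (Submodule.eq_of_le_of_finrank_eq hle (by omega))
  have hlt := finrank_inf_lt_of_not_le hXZ
  have hsup := Submodule.finrank_mono (sup_le hXY hZY)
  have hadd := Submodule.finrank_sup_add_finrank_inf_eq X Z
  omega

theorem inf_eq_inf_of_finrank_inf_add_one {X Y Z : Submodule K V} (hXY : ¬ X ≤ Y) (hZY : Z ≤ Y)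
    (h : Module.finrank K ↥(X ⊓ Z) + 1 = Module.finrank K X) : X ⊓ Z = X ⊓ Y := by
  have hlt := finrank_inf_lt_of_not_le hXY
  exact Submodule.eq_of_le_of_finrank_le (inf_le_inf_left X hZY) (by omega)

end Subspaces

section Functionals

variable {K V : Type*} [Field K] [AddCommGroup V] [Module K V]

theorem ker_le_ker_iff_mem_span_singleton {f g : Module.Dual K V} :
    LinearMap.ker f ≤ LinearMap.ker g ↔ g ∈ Submodule.span K {f} := by
  constructor
  · intro h
    simpa using mem_span_of_iInf_ker_le_ker (L := fun _ : Unit => f) (K := g) (by simpa using h)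
  · rw [Submodule.mem_span_singleton]
    rintro ⟨c, rfl⟩
    exact LinearMap.ker_le_ker_smul f c

theorem exists_ker_eq_of_finrank_add_one [FiniteDimensional K V] {H : Submodule K V}
    (hH : Module.finrank K H + 1 = Module.finrank K V) :
    ∃ f : Module.Dual K V, f ≠ 0 ∧ LinearMap.ker f = H := by
  have hlt : H < ⊤ := lt_top_iff_ne_top.2 fun h => by rw [h, finrank_top] at hH; omega
  obtain ⟨f, hf, hle⟩ := Submodule.exists_le_ker_of_lt_top H hlt
  have hker := Module.Dual.finrank_ker_add_one_of_ne_zero hf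
  exact ⟨f, hf, (Submodule.eq_of_le_of_finrank_eq hle (by omega)).symm⟩

theorem eq_zero_of_forall_notMem_apply_eq_zero {A : Submodule K (Module.Dual K V)} (hA : A ≠ ⊤)
    {x : V} (hx : ∀ f ∉ A, f x = 0) : x = 0 := by
  obtain ⟨g, -, hg⟩ := SetLike.exists_of_lt (lt_top_iff_ne_top.2 hA)
  refine (Module.forall_dual_apply_eq_zero_iff K x).1 fun f => ?_
  by_cases hf : f ∈ A
  · have hfg : f + g ∉ A := fun h => hg ((A.add_mem_iff_right hf).1 h)
    simpa [hx g hg] using hx (f + g) hfg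
  · exact hx f hf

theorem injective_pi_of_forall_notMem_exists_mem_span {A : Submodule K (Module.Dual K V)}
    (hA : A ≠ ⊤) {ι : Type*} {s : ι → Module.Dual K V} (hs : ∀ i, s i ≠ 0)
    (h : ∀ f ∉ A, ∃ i, s i ∈ Submodule.span K {f}) : Function.Injective (LinearMap.pi s) := by
  rw [injective_iff_map_eq_zero]
  refine fun x hx => eq_zero_of_forall_notMem_apply_eq_zero hA fun f hf => ?_
  obtain ⟨i, hi⟩ := h f hf
  obtain ⟨c, hc⟩ := Submodule.mem_span_singleton.1 hi
  have hc0 : c ≠ 0 := fun h0 => hs i (by rw [← hc, h0, zero_smul])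
  have hcx : c • f x = 0 := by
    rw [← LinearMap.smul_apply, hc]
    exact congrFun hx i
  exact (smul_eq_zero_iff_right hc0).1 hcx

end Functionals

section ProjectivePoints

theorem exists_surjective_of_natCard_le {α β : Type*} [Finite α] [Finite β] [Nonempty β]
    (h : Nat.card β ≤ Nat.card α) : ∃ f : α → β, Function.Surjective f := by
  cases nonempty_fintype α
  cases nonempty_fintype β
  rw [Nat.card_eq_fintype_card, Nat.card_eq_fintype_card] at h
  obtain ⟨j⟩ := Function.Embedding.nonempty_of_card_le h
  exact ⟨Function.invFun j, Function.invFun_surjective j.injective⟩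

theorem gaussNum_two (q : ℕ) : gaussNum q 2 = q + 1 := by
  simp [gaussNum, Finset.sum_range_succ, add_comm]

variable {K V : Type*} [Field K] [Finite K] [AddCommGroup V] [Module K V]

theorem natCard_projectivization_eq_gaussNum :
    Nat.card (ℙ K V) = gaussNum (Nat.card K) (Module.finrank K V) :=
  Projectivization.card_of_finrank K V rfl

variable [FiniteDimensional K V] {A : Submodule K V} {ι : Type*} [Finite ι]

theorem gaussNum_add_ncard_not_submodule_le (A : Submodule K V) :
    gaussNum (Nat.card K) (Module.finrank K A) + {p : ℙ K V | ¬ p.submodule ≤ A}.ncard =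
      gaussNum (Nat.card K) (Module.finrank K V) := by
  have : Finite V := Module.finite_of_finite K
  rw [← natCard_projectivization_eq_gaussNum, ← natCard_projectivization_eq_gaussNum,
    ← Set.ncard_add_ncard_compl {p : ℙ K V | p.submodule ≤ A},
    ← range_projectivization_map_subtype,
    Set.ncard_range_of_injective (Projectivization.map_injective _ _),
    range_projectivization_map_subtype, Set.compl_ofPred]

theorem gaussNum_le_card_add_of_forall_exists_mem_span {s : ι → V} (hs : ∀ i, s i ≠ 0)
    (h : ∀ v ∉ A, ∃ i, s i ∈ Submodule.span K {v}) :
    gaussNum (Nat.card K) (Module.finrank K V) ≤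
      Nat.card ι + gaussNum (Nat.card K) (Module.finrank K A) := by
  have hsub : {p : ℙ K V | ¬ p.submodule ≤ A} ⊆
      Set.range fun i => Projectivization.mk K (s i) (hs i) := by
    intro p hp
    induction p using Projectivization.ind with
    | h v hv =>
      rw [Set.mem_ofPred_eq, Projectivization.submodule_mk,
        Submodule.span_singleton_le_iff_mem] at hp
      obtain ⟨i, hi⟩ := h v hp
      exact ⟨i, (Projectivization.mk_eq_mk_iff' K _ _ _ _).2 (Submodule.mem_span_singleton.1 hi)⟩
  have hcard := (Set.ncard_le_ncard hsub).trans_eq (Nat.card_coe_set_eq _).symm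
  have hrange := Finite.card_range_le fun i => Projectivization.mk K (s i) (hs i)
  rw [← gaussNum_add_ncard_not_submodule_le A]
  omega

theorem exists_forall_notMem_and_exists_mem_span (hA : A ≠ ⊤)
    (h : gaussNum (Nat.card K) (Module.finrank K V) ≤
      Nat.card ι + gaussNum (Nat.card K) (Module.finrank K A)) :
    ∃ s : ι → V, (∀ i, s i ∉ A) ∧ ∀ v ∉ A, ∃ i, s i ∈ Submodule.span K {v} := by
  have : Finite V := Module.finite_of_finite K
  have hmk {v : V} (hv : v ∉ A) (hv0 : v ≠ 0) :
      ¬ (Projectivization.mk K v hv0).submodule ≤ A := by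
    rwa [Projectivization.submodule_mk, Submodule.span_singleton_le_iff_mem]
  obtain ⟨w, -, hw⟩ := SetLike.exists_of_lt (lt_top_iff_ne_top.2 hA)
  have : Nonempty {p : ℙ K V | ¬ p.submodule ≤ A} :=
    ⟨⟨_, hmk hw fun h0 => hw (h0 ▸ A.zero_mem)⟩⟩
  have hcard : Nat.card {p : ℙ K V | ¬ p.submodule ≤ A} ≤ Nat.card ι := by
    rw [← gaussNum_add_ncard_not_submodule_le A] at h
    rw [Nat.card_coe_set_eq]
    omega
  obtain ⟨e, he⟩ := exists_surjective_of_natCard_le hcard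
  refine ⟨fun i => (e i).1.rep, fun i hi => ?_, fun v hv => ?_⟩
  · apply (e i).2
    rwa [Projectivization.submodule_eq, Submodule.span_singleton_le_iff_mem]
  · have hv0 : v ≠ 0 := fun h0 => hv (h0 ▸ A.zero_mem)
    obtain ⟨i, hi⟩ := he ⟨_, hmk hv hv0⟩
    have hspan : Submodule.span K {(e i).1.rep} = Submodule.span K {v} := by
      rw [← Projectivization.submodule_eq, hi, Projectivization.submodule_mk]
    exact ⟨i, hspan ▸ Submodule.mem_span_singleton_self _⟩

end ProjectivePoints

section Encoder

variable {F : Type*} [Field F] {n k : ℕ} {E : Type*} [AddCommGroup E] [Module F E]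
  {φ : E →ₗ[F] (Fin n → F)}

theorem map_le_coordHyp_iff {U : Submodule F E} {i : Fin n} :
    U.map φ ≤ coordHyp F n i ↔ LinearMap.proj i ∘ₗ φ ∈ U.dualAnnihilator := by
  rw [Submodule.map_le_iff_le_comap, Submodule.mem_dualAnnihilator]
  rfl

theorem map_ker_le_coordHyp_iff {f : Module.Dual F E} {i : Fin n} :
    (LinearMap.ker f).map φ ≤ coordHyp F n i ↔
      LinearMap.proj i ∘ₗ φ ∈ Submodule.span F {f} := by
  rw [Submodule.map_le_iff_le_comap, ← ker_le_ker_iff_mem_span_singleton, LinearMap.ker_comp]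
  rfl

theorem map_ker_mem_tcOf_iff [FiniteDimensional F E] (hφ : Function.Injective φ)
    (hE : Module.finrank F E = k + 1) {f : Module.Dual F E} (hf : f ≠ 0) :
    (LinearMap.ker f).map φ ∈ tcOf F n k (LinearMap.range φ) ↔
      ∀ i, LinearMap.proj i ∘ₗ φ ∉ Submodule.span F {f} := by
  have hker := Module.Dual.finrank_ker_add_one_of_ne_zero hf
  have hk : Module.finrank F ((LinearMap.ker f).map φ) = k := by
    rw [← (Submodule.equivMapOfInjective φ hφ _).finrank_eq]
    omega
  simp only [tcOf, topOf, ndCodes, Set.mem_inter_iff, Set.mem_ofPred_eq, hk,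
    LinearMap.map_le_range, map_ker_le_coordHyp_iff, true_and]

theorem exists_map_ker_eq_of_mem_tcOf [FiniteDimensional F E] (hφ : Function.Injective φ)
    (hE : Module.finrank F E = k + 1) {Z : Submodule F (Fin n → F)}
    (hZ : Z ∈ tcOf F n k (LinearMap.range φ)) :
    ∃ f : Module.Dual F E, f ≠ 0 ∧ (LinearMap.ker f).map φ = Z := by
  obtain ⟨⟨hZk, hZφ⟩, -⟩ := hZ
  have hmap : (Z.comap φ).map φ = Z := Submodule.map_comap_eq_self hZφ
  have hcomap : Module.finrank F (Z.comap φ) = k := by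
    rw [(Submodule.equivMapOfInjective φ hφ _).finrank_eq, hmap, hZk]
  obtain ⟨f, hf, hker⟩ := exists_ker_eq_of_finrank_add_one (H := Z.comap φ) (by omega)
  exact ⟨f, hf, hker ▸ hmap⟩

theorem forall_mem_tcOf_map_le_iff [FiniteDimensional F E] (hφ : Function.Injective φ)
    (hE : Module.finrank F E = k + 1) {U : Submodule F E} :
    (∀ Z ∈ tcOf F n k (LinearMap.range φ), U.map φ ≤ Z) ↔
      ∀ f ∉ U.dualAnnihilator, ∃ i, LinearMap.proj i ∘ₗ φ ∈ Submodule.span F {f} := by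
  have hmem {f : Module.Dual F E} :
      f ∈ U.dualAnnihilator ↔ U.map φ ≤ (LinearMap.ker f).map φ := by
    rw [Submodule.map_le_map_iff_of_injective hφ, Submodule.mem_dualAnnihilator]
    rfl
  constructor
  · intro h f hf
    have hf0 : f ≠ 0 := fun h0 => hf (h0 ▸ zero_mem _)
    by_contra! hcoord
    exact hf (hmem.2 (h _ ((map_ker_mem_tcOf_iff hφ hE hf0).2 hcoord)))
  · intro h Z hZ
    obtain ⟨f, hf, rfl⟩ := exists_map_ker_eq_of_mem_tcOf hφ hE hZ
    by_contra hle
    obtain ⟨i, hi⟩ := h f (hmem.not.2 hle)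
    exact (map_ker_mem_tcOf_iff hφ hE hf).1 hZ i hi

end Encoder

section Maximality

variable {F : Type*} [Field F] {n k m : ℕ} {Y : Submodule F (Fin n → F)}

theorem isClique_tcOf_s7 (hY : Module.finrank F Y = k + 1) : isClique F n k (tcOf F n k Y) := by
  refine ⟨Set.inter_subset_right, ?_⟩
  rintro X ⟨⟨hX, hXY⟩, -⟩ Z ⟨⟨hZ, hZY⟩, -⟩ hne
  have h := finrank_inf_add_two_of_ne hXY hZY (by omega) (by omega) hne
  unfold adjSub
  omega

theorem isMaxClique_tcOf_iff (hY : Module.finrank F Y = k + 1) :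
    isMaxClique F n k (tcOf F n k Y) ↔
      ∀ X ∈ ndCodes F n k, (∀ Z ∈ tcOf F n k Y, adjSub F n k X Z) → X ≤ Y := by
  have hclique := isClique_tcOf_s7 hY
  constructor
  · rintro ⟨-, hmax⟩ X hX hadj
    have hsymm : Std.Symm (adjSub F n k) := ⟨fun A B h => by rwa [adjSub, inf_comm]⟩
    have hinsert : isClique F n k (insert X (tcOf F n k Y)) :=
      ⟨Set.insert_subset hX hclique.1,
        hclique.2.insert_of_symm fun Z hZ _ => hadj Z hZ⟩
    have hXY : X ∈ tcOf F n k Y := hmax _ hinsert (Set.subset_insert _ _) ▸ Set.mem_insert _ _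
    exact hXY.1.2
  · intro h
    refine ⟨hclique, fun T hT hsub => Set.Subset.antisymm (fun X hX => ?_) hsub⟩
    have hXnd := hT.1 hX
    by_contra hXtc
    have hXY : X ≤ Y := h X hXnd fun Z hZ => hT.2 hX (hsub hZ) fun he => hXtc (he ▸ hZ)
    exact hXtc ⟨⟨hXnd.1, hXY⟩, hXnd⟩

theorem exists_finrank_eq_and_forall_map_le_of_adjSub {X : Submodule F (Fin n → F)}
    (hY : Module.finrank F Y = m + 2) (hX : Module.finrank F X = m + 1) (hXY : ¬ X ≤ Y)
    (hadj : ∀ Z ∈ tcOf F n (m + 1) Y, adjSub F n (m + 1) X Z) :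
    ∃ U : Submodule F Y, Module.finrank F U = m ∧
      ∀ Z ∈ tcOf F n (m + 1) Y, U.map Y.subtype ≤ Z := by
  have hinf : ∀ Z ∈ tcOf F n (m + 1) Y, X ⊓ Z = X ⊓ Y := fun Z hZ =>
    inf_eq_inf_of_finrank_inf_add_one hXY hZ.1.2 (by rw [hadj Z hZ, hX, Nat.add_sub_cancel])
  have hmap : (X.comap Y.subtype).map Y.subtype = X ⊓ Y := by
    rw [Submodule.map_comap_subtype, inf_comm]
  obtain hempty | ⟨Z, hZ⟩ := (tcOf F n (m + 1) Y).eq_empty_or_nonempty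
  · obtain ⟨U, hU⟩ := exists_submodule_finrank_eq (K := F) (V := Y) (r := m) (by omega)
    exact ⟨U, hU, by simp [hempty]⟩
  · refine ⟨X.comap Y.subtype, ?_, fun Z hZ => ?_⟩
    · rw [← Submodule.finrank_map_subtype_eq, hmap, ← hinf Z hZ, hadj Z hZ, Nat.add_sub_cancel]
    · rw [hmap, ← hinf Z hZ]
      exact inf_le_right

theorem not_isMaxClique_tcOf_of_forall_le {W : Submodule F (Fin n → F)}
    (hY : Module.finrank F Y = m + 2) (hYtop : Y ≠ ⊤) (hW : W ∈ ndCodes F n m)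
    (hWZ : ∀ Z ∈ tcOf F n (m + 1) Y, W ≤ Z) (hWY : W ≤ Y) :
    ¬ isMaxClique F n (m + 1) (tcOf F n (m + 1) Y) := by
  obtain ⟨v, -, hv⟩ := SetLike.exists_of_lt (lt_top_iff_ne_top.2 hYtop)
  obtain ⟨X, hXdef⟩ : ∃ X, X = W ⊔ Submodule.span F {v} := ⟨_, rfl⟩
  have hWX : W ≤ X := hXdef ▸ le_sup_left
  have hXY : ¬ X ≤ Y := fun h => hv (h (hXdef ▸
    Submodule.mem_sup_right (Submodule.mem_span_singleton_self v)))
  have hX : Module.finrank F X = m + 1 := by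
    rw [hXdef, Submodule.finrank_sup_span_singleton fun h => hv (hWY h), hW.1]
  have hXnd : X ∈ ndCodes F n (m + 1) := ⟨hX, fun i hi => hW.2 i (hWX.trans hi)⟩
  refine fun hmax => hXY ((isMaxClique_tcOf_iff hY).1 hmax X hXnd fun Z hZ => ?_)
  have hlower := Submodule.finrank_mono (le_inf hWX (hWZ Z hZ))
  have hupper := finrank_inf_lt_of_not_le fun h : X ≤ Z => hXY (h.trans hZ.1.2)
  have hWm := hW.1
  unfold adjSub
  omega

variable [Finite F]

theorem gaussNum_le_add_of_not_isMaxClique_tcOf (hY : Y ∈ ndCodes F n (m + 2))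
    (h : ¬ isMaxClique F n (m + 1) (tcOf F n (m + 1) Y)) :
    gaussNum (Nat.card F) (m + 2) ≤ n + gaussNum (Nat.card F) 2 := by
  rw [isMaxClique_tcOf_iff hY.1] at h
  push Not at h
  obtain ⟨X, hX, hadj, hXY⟩ := h
  obtain ⟨U, hU, hUZ⟩ := exists_finrank_eq_and_forall_map_le_of_adjSub hY.1 hX.1 hXY hadj
  have hcover := (forall_mem_tcOf_map_le_iff Y.injective_subtype hY.1).1 (by rwa [Y.range_subtype])
  have hcoord : ∀ i, LinearMap.proj i ∘ₗ Y.subtype ≠ 0 := by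
    intro i hi
    apply hY.2 i
    rw [← Y.map_subtype_top, map_le_coordHyp_iff, hi]
    exact Submodule.zero_mem _
  have hann : Module.finrank F U.dualAnnihilator = 2 := by
    have hadd := Subspace.finrank_add_finrank_dualAnnihilator_eq U
    have hYm := hY.1
    omega
  simpa [hann, Subspace.dual_finrank_eq, hY.1] using
    gaussNum_le_card_add_of_forall_exists_mem_span hcoord hcover

theorem exists_mem_ndCodes_not_isMaxClique_tcOf (hm : 0 < m) (hmn : m + 2 < n)
    (h : gaussNum (Nat.card F) (m + 2) ≤ n + gaussNum (Nat.card F) 2) :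
    ∃ Y ∈ ndCodes F n (m + 2), ¬ isMaxClique F n (m + 1) (tcOf F n (m + 1) Y) := by
  have hE : Module.finrank F (Fin (m + 2) → F) = m + 2 := Module.finrank_fin_fun F
  obtain ⟨U, hU⟩ := exists_submodule_finrank_eq (K := F) (V := Fin (m + 2) → F) (r := m) (by omega)
  have hann : Module.finrank F U.dualAnnihilator = 2 := by
    have hadd := Subspace.finrank_add_finrank_dualAnnihilator_eq U
    omega
  have hproper : U.dualAnnihilator ≠ ⊤ := by
    intro htop
    rw [htop, finrank_top, Subspace.dual_finrank_eq] at hann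
    omega
  obtain ⟨s, hs, hcover⟩ := exists_forall_notMem_and_exists_mem_span (ι := Fin n) hproper
    (by simpa [hann, Subspace.dual_finrank_eq] using h)
  let φ : (Fin (m + 2) → F) →ₗ[F] (Fin n → F) := LinearMap.pi s
  have hs0 : ∀ i, s i ≠ 0 := fun i h0 => hs i (h0 ▸ Submodule.zero_mem _)
  have hφ : Function.Injective φ := injective_pi_of_forall_notMem_exists_mem_span hproper hs0 hcover
  have hW : U.map φ ∈ ndCodes F n m :=
    ⟨(Submodule.equivMapOfInjective φ hφ U).finrank_eq.symm.trans hU,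
      fun i hi => hs i (map_le_coordHyp_iff.1 hi)⟩
  have hWZ := (forall_mem_tcOf_map_le_iff hφ hE).2 hcover
  have hWY : U.map φ ≤ LinearMap.range φ := LinearMap.map_le_range
  have hY : Module.finrank F (LinearMap.range φ) = m + 2 :=
    (LinearMap.finrank_range_of_inj hφ).trans hE
  have hYtop : LinearMap.range φ ≠ ⊤ := by
    intro htop
    rw [htop, finrank_top, Module.finrank_fin_fun] at hY
    omega
  exact ⟨LinearMap.range φ, ⟨hY, fun i hi => hW.2 i (hWY.trans hi)⟩,
    not_isMaxClique_tcOf_of_forall_le hY hYtop hW hWZ hWY⟩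

end Maximality

/-- For `1 < k < n-1`, the set `T^c(Y)` is a maximal clique of
`Γ(n,k)_q` for every `Y ∈ C(n,k+1)_q` if and only if `[k+1]_q - (q+1) > n`. -/
theorem stmt_7 (q n k : ℕ) (F : Type*) [Field F] [Fintype F]
    (hF : Fintype.card F = q) (hk : 1 < k) (hkn : k < n - 1) :
    (∀ Y ∈ ndCodes F n (k + 1), isMaxClique F n k (tcOf F n k Y)) ↔
      n < gaussNum q (k + 1) - (q + 1) := by
  obtain ⟨m, rfl⟩ : ∃ m, k = m + 1 := ⟨k - 1, by omega⟩
  rw [← hF, ← Nat.card_eq_fintype_card, ← gaussNum_two (Nat.card F), Nat.lt_sub_iff_add_lt]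
  constructor
  · intro hmax
    by_contra! hn
    obtain ⟨Y, hY, hnot⟩ :=
      exists_mem_ndCodes_not_isMaxClique_tcOf (F := F) (m := m) (by omega) (by omega) hn
    exact hnot (hmax Y hY)
  · intro hn Y hY
    by_contra hnot
    exact hn.not_ge (gaussNum_le_add_of_not_isMaxClique_tcOf hY hnot)
end

section
/- Let q be a prime power, 1 < k < n−1, and let f : C(n,k)_q → G_k(V) be an injective map sending adjacent pairs to adjacent pairs, such that for every X ∈ C(n,k−1)_q the image f(S(X)) is a star of Γ_k(V) (i.e., equals S(X') for some (k−1)-dimensional subspace X'). Then for every (k−1)-dimensional subspace X ⊂ V such that S^c(X) is a maximal clique of Γ(n,k)_q, there exists a (k−1)-dimensional subspace X' ⊂ V with f(S^c(X)) ⊆ S(X'). -/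
/-! Only the stars `S^c(X)` with `X` contained in a coordinate hyperplane need an argument. Let `v`
be the all-ones vector, put `A = X + ⟨v⟩` and choose a hyperplane `Z` of `A` through `v`. Both `Z`
and `A` are non-degenerate, so `f` maps the star of `Z` onto the star of some `Z'`. For `B ≠ A` in
`S^c(X)`, the members of the star of `Z` contained in `A + B` form a line of the star. The map `f`
sends it into the line of the star of `Z'` cut out by `f(A) + f(B)` and, both having `q + 1`
elements, onto it. Thus `f(A) + f(B)` determines `A + B`. By maximality `S^c(X)` does not lie in a
top, so neither does its image; and a clique not contained in a top is contained in a star. -/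

section Adjacency

open Set

variable {L : Type*} [Lattice L] {a b c p q u z : L}

/-- Adjacency of two elements of a lattice: their meet is covered by both of them. In the lattice
of subspaces of a vector space, restricted to the `k`-dimensional ones, this is the adjacency of
the Grassmann graph. -/
def Adjacent (a b : L) : Prop := a ⊓ b ⋖ a ∧ a ⊓ b ⋖ b

namespace Adjacent

theorem symm (h : Adjacent a b) : Adjacent b a :=
  ⟨inf_comm a b ▸ h.2, inf_comm a b ▸ h.1⟩

theorem inf_eq_inf_of_inf_le (hab : Adjacent a b) (hac : Adjacent a c) (h : a ⊓ b ≤ c) :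
    a ⊓ b = a ⊓ c :=
  eq_of_le_of_not_lt (le_inf inf_le_left h) fun hlt => hab.1.2 hlt hac.1.lt

theorem le_sup_or_inf_le (hab : Adjacent a b) (hac : Adjacent a c) (hbc : Adjacent b c) :
    c ≤ a ⊔ b ∨ a ⊓ b ≤ c := by
  by_cases h : c ⊓ a = c ⊓ b
  · have hacb : a ⊓ c ≤ b := (inf_comm a c).trans h ▸ inf_le_right
    exact .inr (hac.inf_eq_inf_of_inf_le hab hacb ▸ inf_le_right)
  · left
    calc c = c ⊓ a ⊔ c ⊓ b := (hac.symm.1.wcovBy.sup_eq hbc.symm.1.wcovBy h).symm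
      _ ≤ a ⊔ b := sup_le_sup inf_le_right inf_le_right

theorem covBy_sup [IsModularLattice L] (h : Adjacent a b) : a ⋖ a ⊔ b :=
  covBy_sup_of_inf_covBy_right h.2

theorem sup_eq_sup_of_le_sup [IsModularLattice L] (hab : Adjacent a b) (hac : Adjacent a c)
    (h : c ≤ a ⊔ b) : a ⊔ c = a ⊔ b :=
  eq_of_le_of_not_lt (sup_le le_sup_left h) (hab.covBy_sup.2 hac.covBy_sup.lt)

end Adjacent

theorem adjacent_of_covBy_left (ha : z ⋖ a) (hb : z ⋖ b) (hab : a ≠ b) : Adjacent a b := by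
  have hz : a ⊓ b = z := ha.wcovBy.inf_eq hb.wcovBy hab
  exact ⟨hz.symm ▸ ha, hz.symm ▸ hb⟩

theorem adjacent_of_covBy_right [IsModularLattice L] (ha : a ⋖ u) (hb : b ⋖ u) (hab : a ≠ b) :
    Adjacent a b := by
  have hu : a ⊔ b = u := ha.wcovBy.sup_eq hb.wcovBy hab
  subst hu
  exact ⟨inf_covBy_of_covBy_sup_right hb, inf_covBy_of_covBy_sup_left ha⟩

theorem covBy_and_covBy_of_mem_Ioo [IsModularLattice L] (hza : z ⋖ a) (hau : a ⋖ u)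
    (hc : c ∈ Ioo z u) : z ⋖ c ∧ c ⋖ u := by
  obtain rfl | hca := eq_or_ne c a
  · exact ⟨hza, hau⟩
  have hinf : a ⊓ c = z := (hza.eq_or_eq (le_inf hza.le hc.1.le) inf_le_left).resolve_right
    fun h => hau.2 ((inf_eq_left.1 h).lt_of_ne hca.symm) hc.2
  have hsup : a ⊔ c = u := (hau.eq_or_eq le_sup_left (sup_le hau.le hc.2.le)).resolve_left
    fun h => hza.2 hc.1 ((sup_eq_left.1 h).lt_of_ne hca)
  subst hinf hsup
  exact ⟨inf_covBy_of_covBy_sup_left hau, covBy_sup_of_inf_covBy_left hza⟩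

theorem forall_le_sup_or_forall_inf_le_of_pairwise_adjacent [IsModularLattice L] {S : Set L}
    (hS : S.Pairwise Adjacent) (hp : p ∈ S) (hq : q ∈ S) (hpq : p ≠ q) :
    (∀ r ∈ S, r ≤ p ⊔ q) ∨ ∀ r ∈ S, p ⊓ q ≤ r := by
  have dichotomy : ∀ r ∈ S, r ≤ p ⊔ q ∨ p ⊓ q ≤ r := fun r hr => by
    obtain rfl | hpr := eq_or_ne p r
    · exact .inl le_sup_left
    obtain rfl | hqr := eq_or_ne q r
    · exact .inl le_sup_right
    exact (hS hp hq hpq).le_sup_or_inf_le (hS hp hr hpr) (hS hq hr hqr)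
  rw [or_iff_not_imp_left]
  intro hnot d hd
  push Not at hnot
  obtain ⟨r, hr, hrle⟩ := hnot
  refine (dichotomy d hd).elim (fun hdle => ?_) id
  obtain rfl | hpd := eq_or_ne p d
  · exact inf_le_left
  have hpr : p ≠ r := fun h => hrle (h ▸ le_sup_left)
  have hrd : r ≠ d := fun h => hrle (h ▸ hdle)
  have hinf : p ⊓ q = p ⊓ r :=
    (hS hp hq hpq).inf_eq_inf_of_inf_le (hS hp hr hpr) ((dichotomy r hr).resolve_left hrle)
  rw [hinf]
  refine ((hS hp hr hpr).le_sup_or_inf_le (hS hp hd hpd) (hS hr hd hrd)).resolve_left fun h => ?_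
  have hsup : p ⊔ r = p ⊔ q := ((hS hp hr hpr).sup_eq_sup_of_le_sup (hS hp hd hpd) h).symm.trans
    ((hS hp hq hpq).sup_eq_sup_of_le_sup (hS hp hd hpd) hdle)
  exact hrle (hsup ▸ le_sup_right)

theorem exists_inf_eq_sup_eq_covBy_covBy [BoundedOrder L] [IsModularLattice L]
    [ComplementedLattice L] (hza : z ⋖ a) (hau : a ⋖ u) :
    ∃ c, a ⊓ c = z ∧ a ⊔ c = u ∧ z ⋖ c ∧ c ⋖ u := by
  obtain ⟨c, rfl, rfl⟩ := IsModularLattice.exists_inf_eq_and_sup_eq hza.le hau.le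
  exact ⟨c, rfl, rfl, inf_covBy_of_covBy_sup_left hau, covBy_sup_of_inf_covBy_left hza⟩

theorem exists_not_le_of_maximal_pairwise_adjacent [BoundedOrder L] [IsModularLattice L]
    [ComplementedLattice L] {N : Set L} {x : L} (hzN : {c | z ⋖ c} ⊆ N) (hza : z ⋖ a)
    (hxa : x ⋖ a) (hxz : x ≠ z) (hau : a ⋖ u)
    (hmax : Maximal (fun S => S ⊆ N ∧ S.Pairwise Adjacent) {b ∈ N | x ⋖ b}) :
    ∃ b ∈ N, x ⋖ b ∧ ¬ b ≤ u := by
  by_contra! hle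
  -- A clique inside the top of `u` extends to the whole top, but tops are not stars.
  have hsub : {b ∈ N | x ⋖ b} ⊆ {b ∈ N | b ⋖ u} := fun b ⟨hbN, hxb⟩ =>
    have hbu : b ≠ u := fun h => (h ▸ hxb).2 hxa.lt hau.lt
    ⟨hbN, (covBy_and_covBy_of_mem_Ioo hxa hau ⟨hxb.lt, (hle b hbN hxb).lt_of_ne hbu⟩).2⟩
  have htop : {b ∈ N | b ⋖ u} ⊆ {b ∈ N | x ⋖ b} := hmax.2
    ⟨sep_subset _ _, fun b hb c hc hbc => adjacent_of_covBy_right hb.2 hc.2 hbc⟩ hsub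
  obtain ⟨c, hinf, -, hzc, hcu⟩ := exists_inf_eq_sup_eq_covBy_covBy hza hau
  have hxz' : x ≤ z := hinf ▸ le_inf hxa.le (htop ⟨hzN hzc, hcu⟩).2.le
  exact hxz ((hxa.eq_or_eq hxz' hza.le).resolve_right hza.ne).symm

end Adjacency

section StarMap

open Set

variable {L M : Type*} [Lattice L] [IsModularLattice L] [Lattice M] [IsModularLattice M]
  {f : L → M} {N : Set L} {a b b₁ b₂ c u x z : L} {z' : M}
  (hinj : InjOn f N) (hadj : ∀ b ∈ N, ∀ c ∈ N, Adjacent b c → Adjacent (f b) (f c))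
  (hzN : {c | z ⋖ c} ⊆ N) (hf : f '' {c | z ⋖ c} = {c | z' ⋖ c}) (hza : z ⋖ a)
include hinj hadj hzN hf hza

theorem map_mem_Ioo_sup (hb : b ∈ N) (hab : Adjacent a b) (hzb : ¬ z ≤ b)
    (hc : c ∈ Ioo z (a ⊔ b)) : f c ∈ Ioo z' (f a ⊔ f b) := by
  obtain ⟨hzc, hcu⟩ := covBy_and_covBy_of_mem_Ioo hza hab.covBy_sup hc
  have hbu : b ⋖ a ⊔ b := sup_comm b a ▸ hab.symm.covBy_sup
  have hza' : z' ⋖ f a := hf.subset (mem_image_of_mem f hza)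
  have hzc' : z' ⋖ f c := hf.subset (mem_image_of_mem f hzc)
  have hab' := hadj a (hzN hza) b hb hab
  suffices hle : f c ≤ f a ⊔ f b from
    ⟨hzc'.lt, hle.lt_of_ne fun h => hzc'.2 hza'.lt (h ▸ hab'.covBy_sup.lt)⟩
  obtain rfl | hac := eq_or_ne a c
  · exact le_sup_left
  have hbc : b ≠ c := fun h => hzb (h ▸ hzc.le)
  have hac' := hadj a (hzN hza) c (hzN hzc) (adjacent_of_covBy_left hza hzc hac)
  have hcb' := hadj c (hzN hzc) b hb (adjacent_of_covBy_right hbu hcu hbc).symm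
  rcases hac'.le_sup_or_inf_le hab' hcb' with hle | hle
  · exact hac'.sup_eq_sup_of_le_sup hab' hle ▸ le_sup_right
  -- Otherwise `f b` would lie in the star of `z'`, all of whose elements come from that of `z`.
  · have hz' : f a ⊓ f c = z' := hza'.wcovBy.inf_eq hzc'.wcovBy fun h =>
      hac (hinj (hzN hza) (hzN hzc) h)
    have hzb' : z' ⋖ f b := hz' ▸ hac'.inf_eq_inf_of_inf_le hab' hle ▸ hab'.2
    obtain ⟨d, hzd, hdb⟩ := hf.superset hzb'
    exact absurd (hinj (hzN hzd) hb hdb ▸ hzd.le) hzb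

variable [Finite M]
  (hcard : ∀ u u', a ⋖ u → f a ⋖ u' → (Ioo z' u').ncard ≤ (Ioo z u).ncard)
include hcard

theorem image_Ioo_sup (hb : b ∈ N) (hab : Adjacent a b) (hzb : ¬ z ≤ b) :
    f '' Ioo z (a ⊔ b) = Ioo z' (f a ⊔ f b) := by
  have hsub : Ioo z (a ⊔ b) ⊆ N := fun c hc =>
    hzN (covBy_and_covBy_of_mem_Ioo hza hab.covBy_sup hc).1
  refine eq_of_subset_of_ncard_le (image_subset_iff.2 fun c =>
    map_mem_Ioo_sup hinj hadj hzN hf hza hb hab hzb) ?_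
  rw [(hinj.mono hsub).ncard_image]
  exact hcard _ _ hab.covBy_sup (hadj a (hzN hza) b hb hab).covBy_sup

variable [BoundedOrder L] [ComplementedLattice L]

theorem le_sup_of_map_le_sup (hb₁ : b₁ ∈ N) (hab₁ : Adjacent a b₁) (hzb₁ : ¬ z ≤ b₁)
    (hb₂ : b₂ ∈ N) (hab₂ : Adjacent a b₂) (hzb₂ : ¬ z ≤ b₂) (hle : f b₂ ≤ f a ⊔ f b₁) :
    b₂ ≤ a ⊔ b₁ := by
  have hsup : f a ⊔ f b₂ = f a ⊔ f b₁ := (hadj a (hzN hza) b₁ hb₁ hab₁).sup_eq_sup_of_le_sup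
    (hadj a (hzN hza) b₂ hb₂ hab₂) hle
  obtain ⟨c, -, hac, hzc, hcu⟩ := exists_inf_eq_sup_eq_covBy_covBy hza hab₂.covBy_sup
  have hfc : f c ∈ f '' Ioo z (a ⊔ b₁) := by
    rw [image_Ioo_sup hinj hadj hzN hf hza hcard hb₁ hab₁ hzb₁, ← hsup]
    exact map_mem_Ioo_sup hinj hadj hzN hf hza hb₂ hab₂ hzb₂ ⟨hzc.lt, hcu.lt⟩
  obtain ⟨d, hd, hdc⟩ := hfc
  have hzd : z ⋖ d := (covBy_and_covBy_of_mem_Ioo hza hab₁.covBy_sup hd).1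
  have hcle : c ≤ a ⊔ b₁ := hinj (hzN hzd) (hzN hzc) hdc ▸ hd.2.le
  calc b₂ ≤ a ⊔ b₂ := le_sup_right
    _ = a ⊔ c := hac.symm
    _ ≤ a ⊔ b₁ := sup_le le_sup_left hcle

theorem exists_covBy_map_of_maximal_pairwise_adjacent (hxa : x ⋖ a) (hxz : x ≠ z) (hau : a ⋖ u)
    (hmax : Maximal (fun S => S ⊆ N ∧ S.Pairwise Adjacent) {b ∈ N | x ⋖ b}) :
    ∃ x', ∀ b ∈ N, x ⋖ b → x' ⋖ f b := by
  have haN : a ∈ N := hzN hza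
  have adj_of_ne : ∀ b, x ⋖ b → a ≠ b → Adjacent a b := fun b => adjacent_of_covBy_left hxa
  have not_le : ∀ b, x ⋖ b → a ≠ b → ¬ z ≤ b := fun b hxb hab hzb =>
    have hle : a ≤ b := hxa.wcovBy.sup_eq hza.wcovBy hxz ▸ sup_le hxb.le hzb
    hxb.2 hxa.lt (hle.lt_of_ne hab)
  obtain ⟨b₁, hb₁, hxb₁, hb₁u⟩ :=
    exists_not_le_of_maximal_pairwise_adjacent hzN hza hxa hxz hau hmax
  have hab₁ : a ≠ b₁ := fun h => hb₁u (h ▸ hau.le)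
  have hadj₁ := adj_of_ne b₁ hxb₁ hab₁
  obtain ⟨b₂, hb₂, hxb₂, hb₂u⟩ :=
    exists_not_le_of_maximal_pairwise_adjacent hzN hza hxa hxz hadj₁.covBy_sup hmax
  have hab₂ : a ≠ b₂ := fun h => hb₂u (h ▸ le_sup_left)
  have hnot : ¬ f b₂ ≤ f a ⊔ f b₁ := fun h => hb₂u <|
    le_sup_of_map_le_sup hinj hadj hzN hf hza hcard hb₁ hadj₁ (not_le b₁ hxb₁ hab₁)
      hb₂ (adj_of_ne b₂ hxb₂ hab₂) (not_le b₂ hxb₂ hab₂) h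
  have hclique : (f '' {b ∈ N | x ⋖ b}).Pairwise Adjacent := by
    rintro _ ⟨b, hb, rfl⟩ _ ⟨c, hc, rfl⟩ hbc
    exact hadj b hb.1 c hc.1 (hmax.1.2 hb hc fun h => hbc (h ▸ rfl))
  have hab₁' := hadj a haN b₁ hb₁ hadj₁
  have hinf_le : ∀ r ∈ f '' {b ∈ N | x ⋖ b}, f a ⊓ f b₁ ≤ r :=
    (forall_le_sup_or_forall_inf_le_of_pairwise_adjacent hclique ⟨a, ⟨haN, hxa⟩, rfl⟩
      ⟨b₁, ⟨hb₁, hxb₁⟩, rfl⟩ fun h => hab₁ (hinj haN hb₁ h)).resolve_left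
      fun h => hnot (h _ ⟨b₂, ⟨hb₂, hxb₂⟩, rfl⟩)
  refine ⟨f a ⊓ f b₁, fun b hb hxb => ?_⟩
  obtain rfl | hab := eq_or_ne a b
  · exact hab₁'.1
  · have hab' := hadj a haN b hb (adj_of_ne b hxb hab)
    exact hab₁'.inf_eq_inf_of_inf_le hab' (hinf_le _ ⟨b, ⟨hb, hxb⟩, rfl⟩) ▸ hab'.2

end StarMap

section Subspace

open Module Set

theorem image_comapMkQOrderEmbedding_Ioo_bot_top {R V : Type*} [Ring R] [AddCommGroup V]
    [Module R V] (p : Submodule R V) :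
    Submodule.comapMkQOrderEmbedding p '' Ioo ⊥ ⊤ = Ioo p ⊤ := by
  have hrange : range (Submodule.comapMkQOrderEmbedding p) = Ici p := by
    ext r
    constructor
    · rintro ⟨s, rfl⟩
      exact Submodule.le_comap_mkQ p s
    · intro hr
      exact ⟨r.map p.mkQ, by simpa using hr⟩
  rw [OrderEmbedding.image_Ioo _ (hrange ▸ ordConnected_Ici)]
  simp

theorem image_mapSubtypeOrderEmbedding_Ioo_top {R V : Type*} [Semiring R] [AddCommMonoid V]
    [Module R V] {Z U : Submodule R V} (hZU : Z ≤ U) :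
    Submodule.MapSubtype.orderEmbedding U '' Ioo (Z.submoduleOf U) ⊤ = Ioo Z U := by
  have hrange : range (Submodule.MapSubtype.orderEmbedding U) = Iic U := by
    ext r
    constructor
    · rintro ⟨s, rfl⟩
      exact Submodule.map_subtype_le U s
    · intro hr
      exact ⟨r.submoduleOf U, by simpa [Submodule.submoduleOf] using hr⟩
  rw [OrderEmbedding.image_Ioo _ (hrange ▸ ordConnected_Iic)]
  simpa [Submodule.submoduleOf, inf_eq_right] using congrArg (Ioo · U) (inf_eq_right.2 hZU)

theorem ncard_Ioo_eq_ncard_Ioo_bot_top {R V : Type*} [Ring R] [AddCommGroup V] [Module R V]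
    {Z U : Submodule R V} (hZU : Z ≤ U) :
    (Ioo Z U).ncard = (Ioo (⊥ : Submodule R (U ⧸ Z.submoduleOf U)) ⊤).ncard := by
  rw [← image_mapSubtypeOrderEmbedding_Ioo_top hZU, ← image_comapMkQOrderEmbedding_Ioo_bot_top,
    ncard_image_of_injective _ (RelEmbedding.injective _),
    ncard_image_of_injective _ (RelEmbedding.injective _)]

theorem ncard_Ioo_eq_of_finrank_add_eq {K V W : Type*} [DivisionRing K] [AddCommGroup V]
    [Module K V] [FiniteDimensional K V] [AddCommGroup W] [Module K W] [FiniteDimensional K W]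
    {Z U : Submodule K V} {Z' U' : Submodule K W} (hZU : Z ≤ U) (hZU' : Z' ≤ U')
    (h : finrank K U + finrank K Z' = finrank K U' + finrank K Z) :
    (Ioo Z U).ncard = (Ioo Z' U').ncard := by
  have hV := (Z.submoduleOf U).finrank_quotient_add_finrank
  have hW := (Z'.submoduleOf U').finrank_quotient_add_finrank
  rw [(Submodule.submoduleOfEquivOfLe hZU).finrank_eq] at hV
  rw [(Submodule.submoduleOfEquivOfLe hZU').finrank_eq] at hW
  let e : (U ⧸ Z.submoduleOf U) ≃ₗ[K] (U' ⧸ Z'.submoduleOf U') :=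
    LinearEquiv.ofFinrankEq _ _ (by omega)
  rw [ncard_Ioo_eq_ncard_Ioo_bot_top hZU, ncard_Ioo_eq_ncard_Ioo_bot_top hZU',
    ← ncard_image_of_injective _ (Submodule.orderIsoMapComap e).injective, OrderIso.image_Ioo,
    OrderIso.map_bot, OrderIso.map_top]

variable {K V : Type*} [DivisionRing K] [AddCommGroup V] [Module K V]

theorem finrank_eq_add_one_of_covBy [FiniteDimensional K V] {A B : Submodule K V} (h : A ⋖ B) :
    finrank K B = finrank K A + 1 := by
  obtain ⟨v, hvB, hvA⟩ := SetLike.exists_of_lt h.lt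
  have hsup : A ⊔ K ∙ v = B := (h.eq_or_eq le_sup_left
    (sup_le h.le ((Submodule.span_singleton_le_iff_mem v B).2 hvB))).resolve_left
    fun h => hvA (h ▸ Submodule.mem_sup_right (Submodule.mem_span_singleton_self v))
  rw [← hsup, Submodule.finrank_sup_span_singleton hvA]

theorem covBy_iff_le_and_finrank_eq [FiniteDimensional K V] {A B : Submodule K V} :
    A ⋖ B ↔ A ≤ B ∧ finrank K B = finrank K A + 1 := by
  refine ⟨fun h => ⟨h.le, finrank_eq_add_one_of_covBy h⟩,
    fun ⟨hAB, hfin⟩ => ⟨hAB.lt_of_ne ?_, fun C hAC hCB => ?_⟩⟩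
  · rintro rfl
    omega
  · have := Submodule.finrank_lt_finrank_of_lt hAC
    have := Submodule.finrank_lt_finrank_of_lt hCB
    omega

theorem ncard_Ioo_eq_of_covBy_covBy {W : Type*} [FiniteDimensional K V] [AddCommGroup W]
    [Module K W] [FiniteDimensional K W] {Z A U : Submodule K V} {Z' A' U' : Submodule K W}
    (hZA : Z ⋖ A) (hAU : A ⋖ U) (hZA' : Z' ⋖ A') (hAU' : A' ⋖ U') :
    (Ioo Z U).ncard = (Ioo Z' U').ncard := by
  refine ncard_Ioo_eq_of_finrank_add_eq (hZA.le.trans hAU.le) (hZA'.le.trans hAU'.le) ?_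
  rw [finrank_eq_add_one_of_covBy hAU, finrank_eq_add_one_of_covBy hZA,
    finrank_eq_add_one_of_covBy hAU', finrank_eq_add_one_of_covBy hZA']
  ring

theorem exists_covBy_covBy_mem [FiniteDimensional K V] {X : Submodule K V} {v : V} (hX : X ≠ ⊥)
    (hv : v ∉ X) : ∃ A Z : Submodule K V, X ⋖ A ∧ Z ⋖ A ∧ v ∈ Z := by
  have hlt : K ∙ v < K ∙ v ⊔ X := by
    refine left_lt_sup.2 fun hle => ?_
    obtain h | h := (nonzero_span_atom v fun h => hv (h ▸ X.zero_mem)).le_iff.1 hle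
    · exact hX h
    · exact hv (h ▸ Submodule.mem_span_singleton_self v)
  obtain ⟨Z, hvZ, hZ⟩ := exists_le_covBy_of_lt hlt
  exact ⟨_, Z, Submodule.covBy_span_singleton_sup hv, hZ, hvZ (Submodule.mem_span_singleton_self v)⟩

end Subspace

section Codes

open Module Set

variable {F : Type*} [Field F] {n k : ℕ} {X Y : Submodule F (Fin n → F)}

theorem starOf_eq_setOf_covBy (hk : 1 ≤ k) (hX : finrank F X = k - 1) :
    starOf F n k X = {C | X ⋖ C} := by
  ext C
  simp only [starOf, mem_ofPred_eq, covBy_iff_le_and_finrank_eq, hX, Nat.sub_add_cancel hk]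
  exact and_comm

theorem adjSub_iff_adjacent (hk : 1 ≤ k) (hX : finrank F X = k) (hY : finrank F Y = k) :
    adjSub F n k X Y ↔ Adjacent X Y := by
  simp only [adjSub, Adjacent, covBy_iff_le_and_finrank_eq, inf_le_left, inf_le_right, true_and,
    hX, hY, and_self]
  omega

theorem mem_ndCodes_of_one_mem (hX : finrank F X = k) (h : 1 ∈ X) : X ∈ ndCodes F n k :=
  ⟨hX, fun _ hle => one_ne_zero (hle h)⟩

theorem setOf_covBy_subset_ndCodes (hk : 1 ≤ k) (hX : X ∈ ndCodes F n (k - 1)) :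
    {C | X ⋖ C} ⊆ ndCodes F n k := by
  rw [← starOf_eq_setOf_covBy hk hX.1]
  exact fun C hC => ⟨hC.1, fun i hCi => hX.2 i (hC.2.trans hCi)⟩

theorem isClique_iff_pairwise_adjacent (hk : 1 ≤ k) {S : Set (Submodule F (Fin n → F))} :
    isClique F n k S ↔ S ⊆ ndCodes F n k ∧ S.Pairwise Adjacent := by
  refine and_congr_right fun hS => ⟨fun h A hA B hB hAB => ?_, fun h A hA B hB hAB => ?_⟩
  · exact (adjSub_iff_adjacent hk (hS hA).1 (hS hB).1).1 (h hA hB hAB)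
  · exact (adjSub_iff_adjacent hk (hS hA).1 (hS hB).1).2 (h hA hB hAB)

theorem isMaxClique_iff_maximal (hk : 1 ≤ k) {S : Set (Submodule F (Fin n → F))} :
    isMaxClique F n k S ↔ Maximal (fun T => T ⊆ ndCodes F n k ∧ T.Pairwise Adjacent) S := by
  simp only [isMaxClique, isClique_iff_pairwise_adjacent hk, maximal_iff, eq_comm]

theorem scOf_eq_sep_covBy (hk : 1 ≤ k) (hX : finrank F X = k - 1) :
    scOf F n k X = {B ∈ ndCodes F n k | X ⋖ B} := by
  rw [scOf, starOf_eq_setOf_covBy hk hX, inter_comm]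
  rfl

theorem exists_covBy_covBy_mem_ndCodes (hk : 1 < k) (hX : finrank F X = k - 1) {i : Fin n}
    (hi : X ≤ coordHyp F n i) :
    ∃ A Z : Submodule F (Fin n → F), X ⋖ A ∧ Z ⋖ A ∧ Z ∈ ndCodes F n (k - 1) := by
  have one_notMem : (1 : Fin n → F) ∉ X := fun h => one_ne_zero (hi h)
  have hX_ne_bot : X ≠ ⊥ := fun h => by
    rw [h, finrank_bot] at hX
    omega
  obtain ⟨A, Z, hXA, hZA, one_mem⟩ := exists_covBy_covBy_mem hX_ne_bot one_notMem
  refine ⟨A, Z, hXA, hZA, mem_ndCodes_of_one_mem ?_ one_mem⟩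
  rw [← hX, ← Nat.add_right_cancel_iff (n := 1), ← finrank_eq_add_one_of_covBy hZA,
    ← finrank_eq_add_one_of_covBy hXA]

theorem exists_image_scOf_subset_starOf_of_le_coordHyp [Finite F] (hk : 1 < k) (hkn : k < n)
    {f : Submodule F (Fin n → F) → Submodule F (Fin n → F)}
    (hmem : ∀ A ∈ ndCodes F n k, f A ∈ grass F n k) (hinj : InjOn f (ndCodes F n k))
    (hadj : ∀ A ∈ ndCodes F n k, ∀ B ∈ ndCodes F n k,
      adjSub F n k A B → adjSub F n k (f A) (f B))
    (hstar : ∀ Z ∈ ndCodes F n (k - 1), ∃ Z' : Submodule F (Fin n → F),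
      finrank F Z' = k - 1 ∧ f '' starOf F n k Z = starOf F n k Z')
    (hX : finrank F X = k - 1) (hmax : isMaxClique F n k (scOf F n k X)) {i : Fin n}
    (hi : X ≤ coordHyp F n i) :
    ∃ X' : Submodule F (Fin n → F), finrank F X' = k - 1 ∧
      f '' scOf F n k X ⊆ starOf F n k X' := by
  obtain ⟨A, Z, hXA, hZA, hZ⟩ := exists_covBy_covBy_mem_ndCodes hk hX hi
  have hstarN := setOf_covBy_subset_ndCodes hk.le hZ
  obtain ⟨Z', hZ', himage⟩ := hstar Z hZ
  rw [starOf_eq_setOf_covBy hk.le hZ.1, starOf_eq_setOf_covBy hk.le hZ'] at himage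
  have hA : A ∈ ndCodes F n k := hstarN hZA
  have hA_lt : A < ⊤ := Submodule.lt_top_of_finrank_lt_finrank (by simpa [hA.1] using hkn)
  obtain ⟨U, hAU, -⟩ := exists_covBy_le_of_lt hA_lt
  have hadj' : ∀ B ∈ ndCodes F n k, ∀ C ∈ ndCodes F n k, Adjacent B C → Adjacent (f B) (f C) :=
    fun B hB C hC h => (adjSub_iff_adjacent hk.le (hmem B hB) (hmem C hC)).1
      (hadj B hB C hC ((adjSub_iff_adjacent hk.le hB.1 hC.1).2 h))
  have hcard : ∀ U U', A ⋖ U → f A ⋖ U' → (Ioo Z' U').ncard ≤ (Ioo Z U).ncard :=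
    fun U U' hU hU' =>
      (ncard_Ioo_eq_of_covBy_covBy (himage.subset (mem_image_of_mem f hZA)) hU' hZA hU).le
  have hXZ : X ≠ Z := fun h => hZ.2 i (h ▸ hi)
  rw [isMaxClique_iff_maximal hk.le, scOf_eq_sep_covBy hk.le hX] at hmax
  obtain ⟨X', hX'⟩ := exists_covBy_map_of_maximal_pairwise_adjacent hinj hadj' hstarN himage hZA
    hcard hXA hXZ hAU hmax
  have hX'_finrank : finrank F X' = k - 1 := by
    rw [← hmem A hA, finrank_eq_add_one_of_covBy (hX' A hA hXA), Nat.add_sub_cancel]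
  refine ⟨X', hX'_finrank, ?_⟩
  rw [scOf_eq_sep_covBy hk.le hX, starOf_eq_setOf_covBy hk.le hX'_finrank]
  exact image_subset_iff.2 fun B hB => hX' B hB.1 hB.2

end Codes

/-- If an injective adjacency-preserving `f : C(n,k)_q → G_k(V)` sends
every maximal star `S(X)`, `X ∈ C(n,k-1)_q`, to a star of `Γ_k(V)`, then `f` sends every
star `S^c(X)` of `Γ(n,k)_q` (i.e. every maximal-clique `S^c(X)`) into a star of `Γ_k(V)`. -/
theorem stmt_10 (q n k : ℕ) (F : Type*) [Field F] [Fintype F]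
    (hF : Fintype.card F = q) (hk : 1 < k) (hkn : k < n - 1)
    (f : Submodule F (Fin n → F) → Submodule F (Fin n → F))
    (hmem : ∀ X ∈ ndCodes F n k, f X ∈ grass F n k)
    (hinj : Set.InjOn f (ndCodes F n k))
    (hadj : ∀ X ∈ ndCodes F n k, ∀ Y ∈ ndCodes F n k,
      adjSub F n k X Y → adjSub F n k (f X) (f Y))
    (hstar : ∀ X ∈ ndCodes F n (k - 1), ∃ X' : Submodule F (Fin n → F),
      Module.finrank F ↥X' = k - 1 ∧ f '' starOf F n k X = starOf F n k X') :
    ∀ X : Submodule F (Fin n → F), Module.finrank F ↥X = k - 1 →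
      isMaxClique F n k (scOf F n k X) →
      ∃ X' : Submodule F (Fin n → F),
        Module.finrank F ↥X' = k - 1 ∧ f '' scOf F n k X ⊆ starOf F n k X' := by
  intro X hX hmax
  by_cases hdeg : ∃ i, X ≤ coordHyp F n i
  · obtain ⟨i, hi⟩ := hdeg
    exact exists_image_scOf_subset_starOf_of_le_coordHyp hk (hkn.trans_le (n.sub_le 1)) hmem hinj
      hadj hstar hX hmax hi
  · obtain ⟨X', hX', himage⟩ := hstar X ⟨hX, not_exists.1 hdeg⟩
    exact ⟨X', hX', himage ▸ Set.image_mono Set.inter_subset_left⟩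
end

section
/- Let q ≥ 3 be a prime power, n ≥ 4, and V = F_q^n. Let f : C(n,2)_q → G_2(V) be an injective map sending adjacent pairs to adjacent pairs such that for every P ∈ C(n,1)_q the image f(S(P)) is a star of Γ_2(V) (equals S(P') for some 1-dimensional P'). Suppose g : G_1(V) → G_1(V) satisfies f(S^c(P)) ⊆ S(g(P)) for every 1-dimensional subspace P ⊂ V. Then g is bijective. -/
/-!
If `P ∈ C(n,1)_q` then `S(P) ⊆ C(n,2)_q`, so `f` embeds `S(P)` into the equinumerous star `S(g P)`
and hence maps it onto `S(g P)`. Since `q ≥ 3`, the vectors without zero coordinates span `V`, so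
for points `P ≠ Q` some `T ∈ C(n,1)_q` lies off the line `P ⊔ Q`, and then `P` lies off `Q ⊔ T`.
If `P` is non-degenerate and `g P = g Q`, then `f (Q ⊔ T) ∈ S(g P) = f(S(P))` forces `P ≤ Q ⊔ T`,
which is absurd. So `g` separates non-degenerate points from all others, and for arbitrary `P ≠ Q`
with `g P = g Q` this gives `f (P ⊔ T) = g P ⊔ g T = g Q ⊔ g T = f (Q ⊔ T)`, contradicting the
injectivity of `f`. Thus `g` is an injective self-map of a finite set.
-/

open Module

theorem isAtom_le_sup_of_le_sup {α : Type*} [Lattice α] [OrderBot α] [IsUpperModularLattice α]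
    {a b c : α} (hc : IsAtom c) (hab : ¬ a ≤ b) (h : a ≤ b ⊔ c) : c ≤ a ⊔ b := by
  by_cases hcb : c ≤ b
  · exact hcb.trans le_sup_right
  · have hcov : b ⋖ b ⊔ c := by
      refine covBy_sup_of_inf_covBy_right ?_
      rw [(hc.not_le_iff_disjoint.mp hcb).symm.eq_bot]
      exact hc.bot_covBy
    have hsup : a ⊔ b = b ⊔ c := (sup_le h le_sup_left).eq_of_not_lt
      (hcov.2 (right_lt_sup.mpr hab))
    exact hsup ▸ le_sup_right

section VectorSpace

variable {K V : Type*} [DivisionRing K] [AddCommGroup V] [Module K V]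

theorem finrank_sup_eq_two {P Q : Submodule K V} (hP : finrank K P = 1) (hQ : finrank K Q = 1)
    (hne : P ≠ Q) : finrank K ↥(P ⊔ Q) = 2 := by
  have : FiniteDimensional K P := .of_finrank_eq_succ hP
  have : FiniteDimensional K Q := .of_finrank_eq_succ hQ
  have hinf : P ⊓ Q = ⊥ := ((Submodule.isAtom_iff_finrank_eq_one.mpr hP).disjoint_of_ne
    (Submodule.isAtom_iff_finrank_eq_one.mpr hQ) hne).eq_bot
  have hdim := Submodule.finrank_sup_add_finrank_inf_eq P Q
  rwa [hinf, finrank_bot, add_zero, hP, hQ] at hdim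

theorem exists_linearEquiv_map_eq {P Q : Submodule K V} [FiniteDimensional K P]
    [FiniteDimensional K Q] (h : finrank K P = finrank K Q) :
    ∃ e : V ≃ₗ[K] V, P.map (e : V →ₗ[K] V) = Q := by
  obtain ⟨e, he⟩ := Submodule.exists_linearEquiv_restrict_eq (LinearEquiv.ofFinrankEq P Q h)
  refine ⟨e, Submodule.eq_of_le_of_finrank_eq ?_ ((LinearEquiv.finrank_map_eq e P).trans h)⟩
  rintro _ ⟨x, hx, rfl⟩
  exact he ⟨x, hx⟩ ▸ Subtype.coe_prop _

theorem span_forall_ne_zero_eq_top {ι : Type*} [Finite ι] [Nontrivial Kˣ] :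
    Submodule.span K {v : ι → K | ∀ i, v i ≠ 0} = ⊤ := by
  classical
  obtain ⟨u, hu⟩ := exists_ne (1 : Kˣ)
  have hu' : (u : K) - 1 ≠ 0 := sub_ne_zero.mpr (Units.val_eq_one.not.mpr hu)
  rw [eq_top_iff, ← (Pi.basisFun K ι).span_eq, Submodule.span_le]
  rintro _ ⟨i, rfl⟩
  have hsingle : Pi.basisFun K ι i =
      ((u : K) - 1)⁻¹ • (Function.update (1 : ι → K) i (u : K) - 1) := by
    ext j
    obtain rfl | hj := eq_or_ne j i <;> simp [*]
  rw [hsingle]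
  refine Submodule.smul_mem _ _ (Submodule.sub_mem _ (Submodule.subset_span fun j => ?_)
    (Submodule.subset_span fun _ => one_ne_zero))
  obtain rfl | hj := eq_or_ne j i <;> simp [*]

end VectorSpace

section Codes

variable {F : Type*} [Field F] {n : ℕ}

theorem mem_ndCodes_of_le {k m : ℕ} {P X : Submodule F (Fin n → F)} (hP : P ∈ ndCodes F n k)
    (hX : X ∈ grass F n m) (h : P ≤ X) : X ∈ ndCodes F n m :=
  ⟨hX, fun i hi => hP.2 i (h.trans hi)⟩

theorem scOf_eq_starOf {j k : ℕ} {P : Submodule F (Fin n → F)} (hP : P ∈ ndCodes F n j) :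
    scOf F n k P = starOf F n k P :=
  Set.inter_eq_left.mpr fun _ hX => mem_ndCodes_of_le hP hX.1 hX.2

theorem exists_mem_ndCodes_one_not_le [Nontrivial Fˣ] {W : Submodule F (Fin n → F)} (hW : W ≠ ⊤) :
    ∃ T ∈ ndCodes F n 1, ¬ T ≤ W := by
  obtain ⟨v, hv, hvW⟩ : ∃ v ∈ {v : Fin n → F | ∀ i, v i ≠ 0}, v ∉ W := by
    by_contra! hle
    exact hW (top_le_iff.mp (span_forall_ne_zero_eq_top.symm.trans_le (Submodule.span_le.mpr hle)))
  have hv0 : v ≠ 0 := fun h => hvW (h ▸ W.zero_mem)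
  simp only [← Submodule.span_singleton_le_iff_mem] at hvW
  exact ⟨F ∙ v, ⟨finrank_span_singleton hv0,
    fun i hi => hv i (hi (Submodule.mem_span_singleton_self v))⟩, hvW⟩

theorem exists_mem_ndCodes_one_not_le_sup [Nontrivial Fˣ] (hn : 3 ≤ n)
    {P Q : Submodule F (Fin n → F)} (hP : P ∈ grass F n 1) (hQ : Q ∈ grass F n 1) (hne : P ≠ Q) :
    ∃ T ∈ ndCodes F n 1, Q ≠ T ∧ ¬ P ≤ Q ⊔ T := by
  have htop : P ⊔ Q ≠ ⊤ := fun htop => by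
    have hdim := finrank_sup_eq_two hP hQ hne
    rw [htop, finrank_top, finrank_fin_fun] at hdim
    omega
  obtain ⟨T, hT, hTPQ⟩ := exists_mem_ndCodes_one_not_le htop
  refine ⟨T, hT, fun hQT => hTPQ (hQT ▸ le_sup_right), fun hPQT => hTPQ ?_⟩
  have hPQ : ¬ P ≤ Q := fun hPQ => hne (Submodule.eq_of_le_of_finrank_eq hPQ (hP.trans hQ.symm))
  exact isAtom_le_sup_of_le_sup (Submodule.isAtom_iff_finrank_eq_one.mpr hT.1) hPQ hPQT

theorem starOf_map (k : ℕ) (e : (Fin n → F) ≃ₗ[F] (Fin n → F)) (P : Submodule F (Fin n → F)) :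
    starOf F n k (P.map (e : (Fin n → F) →ₗ[F] (Fin n → F))) =
      Submodule.map (e : (Fin n → F) →ₗ[F] (Fin n → F)) '' starOf F n k P := by
  ext Y
  constructor
  · rintro ⟨hY, hPY⟩
    refine ⟨Y.map (e.symm : (Fin n → F) →ₗ[F] (Fin n → F)), ⟨?_, ?_⟩, ?_⟩
    · rw [LinearEquiv.finrank_map_eq, hY]
    · rwa [← Submodule.comap_equiv_eq_map_symm, ← Submodule.map_le_iff_le_comap]
    · rw [← Submodule.comap_equiv_eq_map_symm, Submodule.map_comap_eq_of_surjective e.surjective]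
  · rintro ⟨X, ⟨hX, hPX⟩, rfl⟩
    exact ⟨(LinearEquiv.finrank_map_eq e X).trans hX, Submodule.map_mono hPX⟩

theorem ncard_starOf_eq (k : ℕ) {P Q : Submodule F (Fin n → F)} (h : finrank F P = finrank F Q) :
    (starOf F n k P).ncard = (starOf F n k Q).ncard := by
  obtain ⟨e, rfl⟩ := exists_linearEquiv_map_eq h
  rw [starOf_map, Set.ncard_image_of_injective _ (Submodule.map_injective_of_injective e.injective)]

variable {f g : Submodule F (Fin n → F) → Submodule F (Fin n → F)}

theorem image_starOf_eq [Finite F] {P : Submodule F (Fin n → F)} (hP : P ∈ ndCodes F n 1)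
    (hinj : Set.InjOn f (ndCodes F n 2)) (hgP : g P ∈ grass F n 1)
    (hg : f '' scOf F n 2 P ⊆ starOf F n 2 (g P)) :
    f '' starOf F n 2 P = starOf F n 2 (g P) := by
  rw [scOf_eq_starOf hP] at hg
  have hinjP : Set.InjOn f (starOf F n 2 P) :=
    hinj.mono (scOf_eq_starOf hP ▸ Set.inter_subset_right)
  refine Set.eq_of_subset_of_ncard_le hg ?_
  rw [hinjP.ncard_image, ncard_starOf_eq 2 (hgP.trans hP.1.symm)]

theorem apply_ne_apply_of_mem_ndCodes [Nontrivial Fˣ] (hn : 3 ≤ n)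
    (hinj : Set.InjOn f (ndCodes F n 2)) {P Q : Submodule F (Fin n → F)}
    (hP : P ∈ ndCodes F n 1) (hQ : Q ∈ grass F n 1) (hne : P ≠ Q)
    (hstar : f '' starOf F n 2 P = starOf F n 2 (g P))
    (hg : f '' scOf F n 2 Q ⊆ starOf F n 2 (g Q)) : g P ≠ g Q := by
  intro hgPQ
  obtain ⟨T, hT, hQT, hPQT⟩ := exists_mem_ndCodes_one_not_le_sup hn hP.1 hQ hne
  have hX : Q ⊔ T ∈ ndCodes F n 2 :=
    mem_ndCodes_of_le hT (finrank_sup_eq_two hQ hT.1 hQT) le_sup_right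
  have hfX : f (Q ⊔ T) ∈ f '' starOf F n 2 P := by
    rw [hstar, hgPQ]
    exact hg ⟨Q ⊔ T, ⟨⟨hX.1, le_sup_left⟩, hX⟩, rfl⟩
  obtain ⟨Y, hY, hfY⟩ := hfX
  have hYX : Y = Q ⊔ T := hinj (mem_ndCodes_of_le hP hY.1 hY.2) hX hfY
  exact hPQT (hYX ▸ hY.2)

theorem apply_eq_sup_of_mem_ndCodes {P Q X : Submodule F (Fin n → F)} (hX : X ∈ ndCodes F n 2)
    (hPX : P ≤ X) (hQX : Q ≤ X) (hgP : g P ∈ grass F n 1) (hgQ : g Q ∈ grass F n 1)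
    (hne : g P ≠ g Q) (hfP : f '' scOf F n 2 P ⊆ starOf F n 2 (g P))
    (hfQ : f '' scOf F n 2 Q ⊆ starOf F n 2 (g Q)) : f X = g P ⊔ g Q := by
  obtain ⟨hfX, hgPX⟩ := hfP ⟨X, ⟨⟨hX.1, hPX⟩, hX⟩, rfl⟩
  obtain ⟨-, hgQX⟩ := hfQ ⟨X, ⟨⟨hX.1, hQX⟩, hX⟩, rfl⟩
  exact (Submodule.eq_of_le_of_finrank_eq (sup_le hgPX hgQX)
    ((finrank_sup_eq_two hgP hgQ hne).trans hfX.symm)).symm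

theorem injOn_grass_one_of_image_starOf_eq [Nontrivial Fˣ] (hn : 3 ≤ n)
    (hinj : Set.InjOn f (ndCodes F n 2)) (hgmem : Set.MapsTo g (grass F n 1) (grass F n 1))
    (hg : ∀ P ∈ grass F n 1, f '' scOf F n 2 P ⊆ starOf F n 2 (g P))
    (hstar : ∀ P ∈ ndCodes F n 1, f '' starOf F n 2 P = starOf F n 2 (g P)) :
    Set.InjOn g (grass F n 1) := by
  intro P hP Q hQ hgPQ
  by_contra hne
  obtain ⟨T, hT, hQT, hPQT⟩ := exists_mem_ndCodes_one_not_le_sup hn hP hQ hne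
  have hPT : P ≠ T := fun hPT => hPQT (hPT ▸ le_sup_right)
  have hline : ∀ R ∈ grass F n 1, R ≠ T → R ⊔ T ∈ ndCodes F n 2 := fun R hR hRT =>
    mem_ndCodes_of_le hT (finrank_sup_eq_two hR hT.1 hRT) le_sup_right
  have himage : ∀ R ∈ grass F n 1, R ≠ T → f (R ⊔ T) = g R ⊔ g T := fun R hR hRT =>
    apply_eq_sup_of_mem_ndCodes (hline R hR hRT) le_sup_left le_sup_right (hgmem hR) (hgmem hT.1)
      (apply_ne_apply_of_mem_ndCodes hn hinj hT hR hRT.symm (hstar T hT) (hg R hR)).symm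
      (hg R hR) (hg T hT.1)
  have hsup : P ⊔ T = Q ⊔ T := hinj (hline P hP hPT) (hline Q hQ hQT) <| by
    rw [himage P hP hPT, himage Q hQ hQT, hgPQ]
  exact hPQT (hsup ▸ le_sup_left)

theorem stmt_11_general [Finite F] (hF : 3 ≤ Nat.card F) (hn : 3 ≤ n)
    (hinj : Set.InjOn f (ndCodes F n 2)) (hgmem : Set.MapsTo g (grass F n 1) (grass F n 1))
    (hg : ∀ P ∈ grass F n 1, f '' scOf F n 2 P ⊆ starOf F n 2 (g P)) :
    Set.BijOn g (grass F n 1) (grass F n 1) := by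
  have : Nontrivial Fˣ := Finite.one_lt_card_iff_nontrivial.mp (by rw [Nat.card_units]; omega)
  have hstar : ∀ P ∈ ndCodes F n 1, f '' starOf F n 2 P = starOf F n 2 (g P) := fun P hP =>
    image_starOf_eq hP hinj (hgmem hP.1) (hg P hP.1)
  exact ((Set.toFinite (grass F n 1)).injOn_iff_bijOn_of_mapsTo hgmem).mp
    (injOn_grass_one_of_image_starOf_eq hn hinj hgmem hg hstar)

end Codes

/-- (`q ≥ 3`, `n ≥ 4`, `k = 2`.) Let `f : C(n,2)_q → G_2(V)` be
injective, adjacency-preserving, sending each maximal star `S(P)`, `P ∈ C(n,1)_q`, to a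
star of `Γ_2(V)`. If `g : G_1(V) → G_1(V)` satisfies `f(S^c(P)) ⊆ S(g(P))` for every
1-dimensional `P`, then `g` is bijective. -/
theorem stmt_11 (q n : ℕ) (F : Type*) [Field F] [Fintype F]
    (hF : Fintype.card F = q) (hq : 3 ≤ q) (hn : 4 ≤ n)
    (f : Submodule F (Fin n → F) → Submodule F (Fin n → F))
    (hmem : ∀ X ∈ ndCodes F n 2, f X ∈ grass F n 2)
    (hinj : Set.InjOn f (ndCodes F n 2))
    (hadj : ∀ X ∈ ndCodes F n 2, ∀ Y ∈ ndCodes F n 2,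
      adjSub F n 2 X Y → adjSub F n 2 (f X) (f Y))
    (hstar : ∀ P ∈ ndCodes F n 1, ∃ P' : Submodule F (Fin n → F),
      Module.finrank F ↥P' = 1 ∧ f '' starOf F n 2 P = starOf F n 2 P')
    (g : Submodule F (Fin n → F) → Submodule F (Fin n → F))
    (hgmem : ∀ P ∈ grass F n 1, g P ∈ grass F n 1)
    (hg : ∀ P ∈ grass F n 1, f '' scOf F n 2 P ⊆ starOf F n 2 (g P)) :
    Set.BijOn g (grass F n 1) (grass F n 1) := by
  exact stmt_11_general (by rw [Nat.card_eq_fintype_card, hF]; exact hq) (by omega) hinj hgmem hg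
end
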